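/- arXiv:2008.00492 — 2 statements merged into one kernel-verified Lean document; each statement's English description precedes it below -/
import Mathlib

section
/- There exist fixed natural numbers m and s such that there is no algorithm (no computable function) which, given arrays of integers a = (a^{i,j}_q) indexed by 1 ≤ i < j ≤ s and 1 ≤ q ≤ m, and b = (b_1,…,b_m), decides whether there exist integers x_1,…,x_s satisfying ∑_{1 ≤ i < j ≤ s} a^{i,j}_q · x_i · x_j = b_q for every 1 ≤ q ≤ m. Formally: there exist m, s such that the predicate (SYM) on pairs (a,b) is not a computable predicate with respect to the standard encoding of finite integer arrays. -/
/-- The property (SYM): there are integers `x 1, …, x s` such that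
`∑_{1 ≤ i < j ≤ s} a q i j * x i * x j = b q` for every `q`. -/
def SYM (m s : ℕ) (a : Fin m → Fin s → Fin s → ℤ) (b : Fin m → ℤ) : Prop :=
  ∃ x : Fin s → ℤ, ∀ q : Fin m,
    (∑ i : Fin s, ∑ j : Fin s, if i < j then a q i j * (x i * x j) else 0) = b q


namespace MRDP
open Dioph

/-! ### Arithmetic: binomials, factorials, products are Diophantine -/

theorem choose_eq_digit (n k : ℕ) :
    n.choose k = ((2 ^ n + 1 + 1) ^ n / (2 ^ n + 1) ^ k) % (2 ^ n + 1) := by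
  set u := 2 ^ n + 1 with hu
  have hupos : 0 < u := by positivity
  have key : ∀ m : ℕ, (u + 1) ^ n % u ^ m = ∑ i ∈ Finset.range m, n.choose i * u ^ i ∧
      (u + 1) ^ n / u ^ m % u = n.choose m := by
    have hlt : ∀ i, n.choose i < u := fun i => by
      have := Nat.choose_le_two_pow n i
      omega
    have bound : ∀ m, ∑ i ∈ Finset.range m, n.choose i * u ^ i < u ^ m := by
      intro m
      induction m with
      | zero => simp
      | succ m ih =>
        rw [Finset.sum_range_succ, pow_succ]
        have := hlt m
        have h2 : (n.choose m + 1) * u ^ m ≤ u * u ^ m := Nat.mul_le_mul_right _ this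
        nlinarith
    have split : ∀ m, ∃ c, (u + 1) ^ n = ∑ i ∈ Finset.range m, n.choose i * u ^ i + u ^ m * c := by
      intro m
      rw [add_pow]
      simp only [one_pow, mul_one]
      by_cases hm : m ≤ n + 1
      · refine ⟨∑ i ∈ Finset.range (n + 1 - m), u ^ i * n.choose (m + i), ?_⟩
        conv_lhs => rw [show n + 1 = m + (n + 1 - m) by omega]
        rw [Finset.sum_range_add _ m, Finset.mul_sum]
        congr 1
        · exact Finset.sum_congr rfl fun i _ => by push_cast; ring
        · exact Finset.sum_congr rfl fun i _ => by push_cast; ring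
      · refine ⟨0, ?_⟩
        push Not at hm
        conv_rhs => rw [show m = (n + 1) + (m - (n + 1)) by omega]
        rw [Finset.sum_range_add _ (n + 1)]
        rw [Finset.sum_eq_zero (s := Finset.range (m - (n + 1)))]
        · simp only [mul_zero, add_zero]
          exact Finset.sum_congr rfl fun i _ => by push_cast; ring
        · intro i _
          rw [Nat.choose_eq_zero_of_lt (by omega)]; simp
    intro m
    have hm : ∀ m, (u + 1) ^ n % u ^ m = ∑ i ∈ Finset.range m, n.choose i * u ^ i := by
      intro m
      obtain ⟨c, hc⟩ := split m
      rw [hc, Nat.add_mul_mod_self_left, Nat.mod_eq_of_lt (bound m)]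
    refine ⟨hm m, ?_⟩
    obtain ⟨c, hc⟩ := split (m + 1)
    rw [Finset.sum_range_succ] at hc
    have : (u + 1) ^ n = (∑ i ∈ Finset.range m, n.choose i * u ^ i) +
        u ^ m * (n.choose m + u * c) := by rw [hc]; ring
    rw [this, Nat.add_mul_div_left _ _ (by positivity), Nat.div_eq_of_lt (bound m), zero_add,
      Nat.add_mul_mod_self_left, Nat.mod_eq_of_lt (hlt m)]
  exact (key k).2.symm

theorem bernoulli_aux (s d n : ℕ) :
    (s + d) * (s + d) ^ n ≤ (s + d) * s ^ n + n * d * (s + d) ^ n := by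
  induction n with
  | zero => simp
  | succ n ih =>
    have h : s ^ n ≤ (s + d) ^ n := Nat.pow_le_pow_left (by omega) n
    calc (s + d) * (s + d) ^ (n + 1) = (s + d) * ((s + d) * (s + d) ^ n) := by ring
      _ ≤ (s + d) * ((s + d) * s ^ n + n * d * (s + d) ^ n) := Nat.mul_le_mul_left _ ih
      _ = (s + d) * s ^ (n + 1) + (s + d) * d * s ^ n + n * d * (s + d) ^ (n + 1) := by ring
      _ ≤ (s + d) * s ^ (n + 1) + (s + d) * d * (s + d) ^ n + n * d * (s + d) ^ (n + 1) := by
          gcongr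
      _ = _ := by ring

theorem factorial_eq_div (n : ℕ) :
    n.factorial = ((n ^ n + 1) * (n * n) + n + 1) ^ n /
      ((n ^ n + 1) * (n * n) + n + 1).choose n := by
  obtain ⟨s, hs⟩ : ∃ s, s = (n ^ n + 1) * (n * n) + 1 := ⟨_, rfl⟩
  have hr : (n ^ n + 1) * (n * n) + n + 1 = s + n := by omega
  rw [hr]
  have hF : n.factorial ≤ n ^ n := Nat.factorial_le_pow n
  have hD := Nat.descFactorial_eq_factorial_mul_choose (s + n) n
  have hle := Nat.descFactorial_le_pow (s + n) n
  have hge : s ^ n ≤ (s + n).descFactorial n :=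
    (Nat.pow_le_pow_left (by omega) n).trans (Nat.pow_sub_le_descFactorial (s + n) n)
  have hB := bernoulli_aux s n n
  have hpos := Nat.factorial_pos n
  symm
  apply Nat.div_eq_of_lt_le
  · rw [← hD]; exact hle
  · have hR : 0 < (s + n) ^ n := by have : 0 < s + n := by omega
                                    positivity
    have h1 : (n.factorial + 1) * (n * n) < s := by
      have : (n.factorial + 1) * (n * n) ≤ (n ^ n + 1) * (n * n) :=
        Nat.mul_le_mul_right _ (by omega)
      omega
    have h2 : (s + n) * (s + n) ^ n ≤ (s + n) * (n.factorial * (s + n).choose n)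
        + n * n * (s + n) ^ n := by
      rw [← hD]
      have := Nat.mul_le_mul_left (s + n) hge
      omega
    generalize (s + n).choose n = C at *
    generalize (s + n) ^ n = R at *
    generalize n.factorial = F at *
    by_contra hcon
    push Not at hcon
    have h3 : (s + n) * F * ((F + 1) * C) ≤ (s + n) * F * R := Nat.mul_le_mul_left _ hcon
    have h4 := Nat.mul_le_mul_left (F + 1) h2
    have h5 : (F + 1) * (n * n) * R < (s + n) * R :=
      Nat.mul_lt_mul_of_pos_right (by omega) hR
    nlinarith

theorem prod_eq_mod (y t : ℕ) (ht : 0 < t) :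
    ∏ k ∈ Finset.range y, ((k + 1) * t + 1) =
      (t ^ y * (y.factorial * ((t * (y * t + 1) ^ y + 1 - (y * t + 1) ^ y) + y).choose y)) %
        (t * (y * t + 1) ^ y + 1) := by
  obtain ⟨B, hB⟩ : ∃ B, B = (y * t + 1) ^ y := ⟨_, rfl⟩
  rw [← hB]
  have hle : ∏ k ∈ Finset.range y, ((k + 1) * t + 1) ≤ B := by
    rw [hB]
    calc _ ≤ ∏ k ∈ Finset.range y, (y * t + 1) := by
          apply Finset.prod_le_prod'
          intro k hk
          have := Finset.mem_range.1 hk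
          have : (k + 1) * t ≤ y * t := Nat.mul_le_mul_right _ this
          omega
      _ = _ := by simp
  have hBt : B ≤ t * B := Nat.le_mul_of_pos_left _ ht
  rw [← Nat.ascFactorial_eq_factorial_mul_choose]
  have hlt : ∏ k ∈ Finset.range y, ((k + 1) * t + 1) < t * B + 1 := by omega
  rw [← Nat.mod_eq_of_lt hlt]
  obtain ⟨q, hq⟩ : ∃ q, q = t * B + 1 - B := ⟨_, rfl⟩
  rw [← hq]
  have hasc : ∀ y, t ^ y * (q + 1).ascFactorial y =
      ∏ k ∈ Finset.range y, (t * (q + 1 + k)) := by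
    intro y
    rw [Nat.ascFactorial_eq_prod_range, Finset.prod_mul_distrib]
    simp
  rw [hasc]
  have hqt : q * t ≡ 1 [MOD (t * B + 1)] := by
    have h1 : q + B = t * B + 1 := by omega
    have h2 : q * t + (t * B + 1) = 1 + t * (t * B + 1) := by nlinarith
    have h3 : q * t + (t * B + 1) ≡ 1 + t * (t * B + 1) [MOD (t * B + 1)] := by rw [h2]
    simpa [Nat.ModEq] using h3
  change Nat.ModEq _ _ _
  have : ∀ y, ∏ k ∈ Finset.range y, ((k + 1) * t + 1) ≡
      ∏ k ∈ Finset.range y, (t * (q + 1 + k)) [MOD (t * B + 1)] := by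
    intro y
    induction y with
    | zero => simp; rfl
    | succ y ih =>
      rw [Finset.prod_range_succ, Finset.prod_range_succ]
      refine ih.mul ?_
      have := (hqt.symm).add_left ((y + 1) * t)
      refine this.trans (by rw [show (y + 1) * t + q * t = t * (q + 1 + y) by ring])
  exact this y

section
variable {α : Type} {f g h : (α → ℕ) → ℕ}

theorem cst (n : ℕ) : DiophFn (fun _ : α → ℕ => n) := const_dioph n

theorem choose_dioph (df : DiophFn f) (dg : DiophFn g) :
    DiophFn fun v => (f v).choose (g v) := by
  have h2 : DiophFn fun v => 2 ^ f v + 1 := add_dioph (pow_dioph (cst 2) df) (cst 1)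
  have := mod_dioph (div_dioph (pow_dioph (add_dioph h2 (cst 1)) df) (pow_dioph h2 dg)) h2
  simpa only [← choose_eq_digit] using this

theorem factorial_dioph (df : DiophFn f) : DiophFn fun v => (f v).factorial := by
  have h2 : DiophFn fun v => (f v ^ f v + 1) * (f v * f v) + f v + 1 :=
    add_dioph (add_dioph (mul_dioph (add_dioph (pow_dioph df df) (cst 1)) (mul_dioph df df)) df)
      (cst 1)
  have := div_dioph (pow_dioph h2 df) (choose_dioph h2 df)
  simpa only [← factorial_eq_div] using this

theorem descFactorial_dioph (df : DiophFn f) (dg : DiophFn g) :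
    DiophFn fun v => (f v).descFactorial (g v) := by
  have := mul_dioph (factorial_dioph dg) (choose_dioph df dg)
  simpa only [← Nat.descFactorial_eq_factorial_mul_choose] using this

theorem prod_dioph (df : DiophFn f) (dg : DiophFn g) (hg : ∀ v, 0 < g v) :
    DiophFn fun v => ∏ k ∈ Finset.range (f v), ((k + 1) * g v + 1) := by
  have hB : DiophFn fun v => (f v * g v + 1) ^ f v :=
    pow_dioph (add_dioph (mul_dioph df dg) (cst 1)) df
  have hM : DiophFn fun v => g v * (f v * g v + 1) ^ f v + 1 :=
    add_dioph (mul_dioph dg hB) (cst 1)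
  have := mod_dioph (mul_dioph (pow_dioph dg df) (mul_dioph (factorial_dioph df)
    (choose_dioph (add_dioph (sub_dioph hM hB) df) df))) hM
  have e : (fun v => ∏ k ∈ Finset.range (f v), ((k + 1) * g v + 1)) = _ :=
    funext fun v => prod_eq_mod (f v) (g v) (hg v)
  rw [e]; exact this

theorem ex1 {P : (α → ℕ) → ℕ → Prop}
    (h : Dioph {w : Option α → ℕ | P (fun i => w (some i)) (w none)}) :
    Dioph {v | ∃ x, P v x} := ex1_dioph h

theorem up (df : DiophFn f) : DiophFn fun w : Option α → ℕ => f (fun i => w (some i)) :=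
  reindex_diophFn some df

theorem pair_dioph (df : DiophFn f) (dg : DiophFn g) :
    DiophFn fun v => Nat.pair (f v) (g v) := by
  have h1 : Dioph {w : Option α → ℕ | f (fun i => w (some i)) < g (fun i => w (some i)) ∧
      g (fun i => w (some i)) * g (fun i => w (some i)) + f (fun i => w (some i)) = w none} :=
    (lt_dioph (up df) (up dg)).inter
      (eq_dioph (add_dioph (mul_dioph (up dg) (up dg)) (up df)) (proj_dioph none))
  have h2 : Dioph {w : Option α → ℕ | g (fun i => w (some i)) ≤ f (fun i => w (some i)) ∧
      f (fun i => w (some i)) * f (fun i => w (some i)) + f (fun i => w (some i))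
        + g (fun i => w (some i)) = w none} :=
    (le_dioph (up dg) (up df)).inter
      (eq_dioph (add_dioph (add_dioph (mul_dioph (up df) (up df)) (up df)) (up dg))
        (proj_dioph none))
  refine (h1.union h2).ext fun w => ?_
  simp only [Set.mem_union, Set.mem_ofPred_eq, Nat.pair, Function.comp_def]
  split_ifs with hh
  · simp [hh]
  · simp [hh]; omega

end
end MRDP

namespace MRDP
open Dioph

/-! ### Polynomial expressions -/

/-- Integer polynomial expressions with variables in `γ`. -/
inductive PExpr (γ : Type) : Type
  | var : γ → PExpr γ
  | const : ℤ → PExpr γ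
  | sub : PExpr γ → PExpr γ → PExpr γ
  | mul : PExpr γ → PExpr γ → PExpr γ

namespace PExpr
variable {γ δ : Type}

/-- Evaluation. -/
def eval (v : γ → ℕ) : PExpr γ → ℤ
  | var i => v i
  | const c => c
  | sub a b => a.eval v - b.eval v
  | mul a b => a.eval v * b.eval v

/-- The variables occurring. -/
def vars : PExpr γ → List γ
  | var i => [i]
  | const _ => []
  | sub a b => a.vars ++ b.vars
  | mul a b => a.vars ++ b.vars

theorem isPoly (e : PExpr γ) : IsPoly fun v => e.eval v := by
  induction e with
  | var i => exact IsPoly.proj i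
  | const c => exact IsPoly.const c
  | sub a b iha ihb => exact IsPoly.sub iha ihb
  | mul a b iha ihb => exact IsPoly.mul iha ihb

theorem exists_of_isPoly {f : (γ → ℕ) → ℤ} (h : IsPoly f) : ∃ e : PExpr γ, ∀ v, e.eval v = f v := by
  induction h with
  | proj i => exact ⟨var i, fun _ => rfl⟩
  | const c => exact ⟨const c, fun _ => rfl⟩
  | sub _ _ iha ihb =>
    obtain ⟨a, ha⟩ := iha
    obtain ⟨b, hb⟩ := ihb
    exact ⟨sub a b, fun v => by simp [eval, ha, hb]⟩
  | mul _ _ iha ihb =>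
    obtain ⟨a, ha⟩ := iha
    obtain ⟨b, hb⟩ := ihb
    exact ⟨mul a b, fun v => by simp [eval, ha, hb]⟩

theorem eval_congr {e : PExpr γ} {v w : γ → ℕ} (h : ∀ i ∈ e.vars, v i = w i) :
    e.eval v = e.eval w := by
  induction e with
  | var i => simpa [eval, vars] using h
  | const c => rfl
  | sub a b iha ihb =>
    simp only [vars, List.mem_append] at h
    simp only [eval, iha fun i hi => h i (Or.inl hi), ihb fun i hi => h i (Or.inr hi)]
  | mul a b iha ihb =>
    simp only [vars, List.mem_append] at h
    simp only [eval, iha fun i hi => h i (Or.inl hi), ihb fun i hi => h i (Or.inr hi)]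

theorem eval_modEq (e : PExpr γ) {v w : γ → ℕ} {m : ℕ} (h : ∀ i, v i ≡ w i [MOD m]) :
    e.eval v ≡ e.eval w [ZMOD m] := by
  induction e with
  | var i => exact Int.natCast_modEq_iff.2 (h i)
  | const c => rfl
  | sub a b iha ihb => exact iha.sub ihb
  | mul a b iha ihb => exact iha.mul ihb

theorem exists_bound (e : PExpr γ) (u : γ → (δ → ℕ) → ℕ) (hu : ∀ i, DiophFn (u i)) :
    ∃ g : (δ → ℕ) → ℕ, DiophFn g ∧ ∀ w x, (∀ i, x i ≤ u i w) → (e.eval x).natAbs ≤ g w := by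
  induction e with
  | var i => exact ⟨u i, hu i, fun w x hx => by simpa [eval] using hx i⟩
  | const c => exact ⟨fun _ => c.natAbs, cst _, fun w x hx => le_rfl⟩
  | sub a b iha ihb =>
    obtain ⟨f, hf, hf'⟩ := iha
    obtain ⟨g, hg, hg'⟩ := ihb
    exact ⟨_, add_dioph hf hg, fun w x hx => by
      have h1 := hf' w x hx
      have h2 := hg' w x hx
      simp only [eval]
      omega⟩
  | mul a b iha ihb =>
    obtain ⟨f, hf, hf'⟩ := iha
    obtain ⟨g, hg, hg'⟩ := ihb
    exact ⟨_, mul_dioph hf hg, fun w x hx => by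
      have h1 := hf' w x hx
      have h2 := hg' w x hx
      simp only [eval, Int.natAbs_mul]
      exact Nat.mul_le_mul h1 h2⟩

end PExpr

theorem exists_finite_index {γ : Type} (l : List γ) :
    ∃ (n : ℕ) (r : γ → Fin (n + 1)), Set.InjOn r {x | x ∈ l} := by
  classical
  refine ⟨l.length, fun x => ⟨l.idxOf x, by have := List.idxOf_le_length (a := x) (l := l); omega⟩,
    ?_⟩
  intro x hx y hy hxy
  have hxy' : l.idxOf x = l.idxOf y := by simpa using hxy
  exact (List.idxOf_inj hx).1 hxy'

theorem exists_extend {γ A : Type} [Inhabited A] {l : List γ} {n : ℕ} {r : γ → Fin n}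
    (hr : Set.InjOn r {x | x ∈ l}) (X : γ → A) : ∃ x : Fin n → A, ∀ i ∈ l, x (r i) = X i := by
  classical
  refine ⟨fun k => if h : ∃ i ∈ l, r i = k then X h.choose else default, fun i hi => ?_⟩
  have h : ∃ j ∈ l, r j = r i := ⟨i, hi, rfl⟩
  simp only [dif_pos h]
  exact congrArg X (hr h.choose_spec.1 hi h.choose_spec.2)

/-- Every Diophantine set is described with finitely many dummies. -/
theorem exists_fin_dummies {α : Type} {S : Set (α → ℕ)} (h : Dioph S) :
    ∃ (n : ℕ) (e : PExpr (α ⊕ Fin n)), ∀ v, v ∈ S ↔ ∃ t, e.eval (Sum.elim v t) = 0 := by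
  obtain ⟨β, p, hp⟩ := h
  obtain ⟨e, he⟩ := PExpr.exists_of_isPoly p.isPoly
  obtain ⟨n, r, hr⟩ := exists_finite_index (e.vars.filterMap Sum.getRight?)
  obtain ⟨e', he'⟩ := PExpr.exists_of_isPoly
    (p.map (Sum.elim Sum.inl (Sum.inr ∘ r) : α ⊕ β → α ⊕ Fin (n + 1))).isPoly
  refine ⟨n + 1, e', fun v => (hp v).trans ?_⟩
  simp only [he']
  constructor
  · rintro ⟨t, ht⟩
    obtain ⟨x, hx⟩ := exists_extend hr t
    refine ⟨x, ?_⟩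
    rw [Poly.map_apply, ← he, ← ht, ← he]
    apply PExpr.eval_congr
    rintro (i | i) hi
    · rfl
    · exact hx i (by simpa [List.mem_filterMap] using hi)
  · rintro ⟨x, hx⟩
    refine ⟨x ∘ r, ?_⟩
    rw [← hx, Poly.map_apply]
    congr 1
    funext i
    rcases i with i | i <;> rfl

end MRDP

namespace MRDP
open Dioph

/-! ### Bounded universal quantification -/

/-- The point with first coordinate `k`, parameters `v`, dummies `t`. -/
def pt {α : Type} {n : ℕ} (k : ℕ) (v : α → ℕ) (t : Fin n → ℕ) : Option α ⊕ Fin n → ℕ :=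
  Sum.elim (fun o => o.elim k v) t

theorem ball_core_mp {α : Type} {n : ℕ} (e : PExpr (Option α ⊕ Fin n)) (v : α → ℕ) (y u B : ℕ)
    (hB : ∀ k < y, ∀ t : Fin n → ℕ, (∀ j, t j ≤ u) → (e.eval (pt k v t)).natAbs ≤ B)
    (T : ℕ) (hT : T = (y + u + B).factorial) (N : ℕ)
    (hN : N = ∏ k ∈ Finset.range y, ((k + 1) * T + 1)) (C : ℕ) (a : Fin n → ℕ)
    (hC : N ∣ (C + 1) * T + 1) (ha : ∀ j, N ∣ (a j).descFactorial (u + 1))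
    (he : N ∣ (e.eval (pt C v a)).natAbs) (k : ℕ) (hk : k < y) :
    ∃ t, e.eval (pt k v t) = 0 := by
  have hTpos : 0 < T := hT ▸ Nat.factorial_pos _
  have hne : (k + 1) * T + 1 ≠ 1 := by
    have : 0 < (k + 1) * T := by positivity
    omega
  obtain ⟨p, hp, hpk⟩ := Nat.exists_prime_and_dvd hne
  have hkN : (k + 1) * T + 1 ∣ N := by
    rw [hN]
    exact Finset.dvd_prod_of_mem (fun k => (k + 1) * T + 1) (Finset.mem_range.2 hk)
  have hpN : p ∣ N := hpk.trans hkN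
  have hpT : ¬ p ∣ T := by
    intro h
    have h1 : p ∣ (k + 1) * T := h.mul_left _
    exact hp.one_lt.ne' (Nat.dvd_one.1 ((Nat.dvd_add_right h1).1 hpk))
  have hpQ : y + u + B < p := by
    by_contra h
    exact hpT (hT ▸ hp.dvd_factorial.2 (not_lt.1 h))
  have hCk : k ≡ C [MOD p] := by
    have h1 : (k + 1) * T + 1 ≡ (C + 1) * T + 1 [MOD p] :=
      ((Nat.modEq_zero_iff_dvd).2 hpk).trans ((Nat.modEq_zero_iff_dvd).2 (hpN.trans hC)).symm
    have h2 : (k + 1) * T ≡ (C + 1) * T [MOD p] := Nat.ModEq.add_right_cancel' 1 h1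
    have h3 : k + 1 ≡ C + 1 [MOD p] :=
      Nat.ModEq.cancel_right_of_coprime ((Nat.Prime.coprime_iff_not_dvd hp).2 hpT) h2
    exact Nat.ModEq.add_right_cancel' 1 h3
  have ht : ∀ j, ∃ t, t ≤ u ∧ t ≡ a j [MOD p] := by
    intro j
    have h1 := hpN.trans (ha j)
    rw [Nat.descFactorial_eq_prod_range] at h1
    obtain ⟨i, hi, hd⟩ := (hp.prime.dvd_finsetProd_iff _).1 h1
    have hi := Finset.mem_range.1 hi
    by_cases hia : i ≤ a j
    · exact ⟨i, by omega, (Nat.modEq_iff_dvd' hia).2 hd⟩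
    · exact ⟨a j, by omega, rfl⟩
  choose t htu hta using ht
  refine ⟨t, ?_⟩
  have hmod : e.eval (pt k v t) ≡ e.eval (pt C v a) [ZMOD p] := by
    apply PExpr.eval_modEq
    rintro ((_ | i) | j)
    · exact hCk
    · rfl
    · exact hta j
  have h0 : e.eval (pt C v a) ≡ 0 [ZMOD p] :=
    Int.modEq_zero_iff_dvd.2 (Int.natCast_dvd.2 (hpN.trans he))
  have hd : (p : ℤ) ∣ e.eval (pt k v t) := Int.modEq_zero_iff_dvd.1 (hmod.trans h0)
  have hle := hB k hk t htu
  exact Int.eq_zero_of_dvd_of_natAbs_lt_natAbs hd (by simp; omega)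

theorem ball_core_mpr {α : Type} {n : ℕ} (e : PExpr (Option α ⊕ Fin n)) (v : α → ℕ) (y u Q : ℕ)
    (hQ : y ≤ Q)
    (T : ℕ) (hT : T = Q.factorial) (N : ℕ)
    (hN : N = ∏ k ∈ Finset.range y, ((k + 1) * T + 1))
    (H : ∀ k < y, ∃ t : Fin n → ℕ, (∀ j, t j ≤ u) ∧ e.eval (pt k v t) = 0) :
    ∃ (C : ℕ) (a : Fin n → ℕ), N ∣ (C + 1) * T + 1 ∧ (∀ j, N ∣ (a j).descFactorial (u + 1)) ∧
      N ∣ (e.eval (pt C v a)).natAbs := by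
  have hcop : ∀ i < y, ∀ j < y, i ≠ j → Nat.Coprime ((i + 1) * T + 1) ((j + 1) * T + 1) := by
    have : ∀ i j, i < j → j < y → Nat.Coprime ((i + 1) * T + 1) ((j + 1) * T + 1) := by
      intro i j hij hj
      apply Nat.coprime_mul_succ
      rw [hT]
      exact Nat.dvd_factorial (by omega) (by omega)
    intro i hi j hj hij
    rcases lt_or_gt_of_ne hij with h | h
    · exact this i j h hj
    · exact (this j i h hi).symm
  have hdvdN : ∀ x, (∀ k < y, (k + 1) * T + 1 ∣ x) → N ∣ x := by
    intro x hx
    rw [hN]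
    apply Finset.prod_dvd_of_isRelPrime
    · intro i hi j hj hij
      simp only [Finset.coe_range, Set.mem_Iio] at hi hj
      exact (Nat.coprime_iff_isRelPrime.1 (hcop i hi j hj hij))
    · intro k hk
      exact hx k (Finset.mem_range.1 hk)
  choose! t htu ht0 using H
  have hcrt : ∀ j, ∃ a, ∀ k < y, a ≡ t k j [MOD ((k + 1) * T + 1)] := by
    intro j
    have := Nat.chineseRemainderOfFinset (fun k => t k j) (fun k => (k + 1) * T + 1)
      (Finset.range y) (fun k _ => by omega) (by
        intro i hi j hj hij
        simp only [Finset.coe_range, Set.mem_Iio] at hi hj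
        exact hcop i hi j hj hij)
    exact ⟨this.1, fun k hk => this.2 k (Finset.mem_range.2 hk)⟩
  choose a ha using hcrt
  have hNT : ∃ M, N = 1 + T * M := by
    rw [hN]
    clear * -
    induction y with
    | zero => exact ⟨0, by simp⟩
    | succ y ih =>
      obtain ⟨M, hM⟩ := ih
      rw [Finset.prod_range_succ, hM]
      exact ⟨(y + 1) + M + T * M * (y + 1), by ring⟩
  obtain ⟨M, hM⟩ := hNT
  have hC : N ∣ (M + T * M + 1) * T + 1 := ⟨1 + T, by rw [hM]; ring⟩
  refine ⟨M + T * M, a, hC, fun j => hdvdN _ fun k hk => ?_, hdvdN _ fun k hk => ?_⟩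
  · rw [Nat.descFactorial_eq_prod_range]
    have h1 : (k + 1) * T + 1 ∣ a j - t k j := by
      by_cases h : t k j ≤ a j
      · exact (Nat.modEq_iff_dvd' h).1 (ha j k hk).symm
      · rw [Nat.sub_eq_zero_of_le (by omega)]; exact dvd_zero _
    exact h1.trans (Finset.dvd_prod_of_mem (fun i => a j - i)
      (Finset.mem_range.2 (by have := htu k hk j; omega)))
  · have hkN : (k + 1) * T + 1 ∣ N := by
      rw [hN]
      exact Finset.dvd_prod_of_mem (fun k => (k + 1) * T + 1) (Finset.mem_range.2 hk)
    have hCk : M + T * M ≡ k [MOD ((k + 1) * T + 1)] := by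
      have h1 : (M + T * M + 1) * T + 1 ≡ (k + 1) * T + 1 [MOD ((k + 1) * T + 1)] :=
        ((Nat.modEq_zero_iff_dvd).2 (hkN.trans hC)).trans
          ((Nat.modEq_zero_iff_dvd).2 dvd_rfl).symm
      have h2 := Nat.ModEq.add_right_cancel' 1 h1
      have h3 : M + T * M + 1 ≡ k + 1 [MOD ((k + 1) * T + 1)] :=
        Nat.ModEq.cancel_right_of_coprime (by
          change Nat.Coprime _ _
          simp) h2
      exact Nat.ModEq.add_right_cancel' 1 h3
    have hmod : e.eval (pt (M + T * M) v a) ≡ e.eval (pt k v (t k)) [ZMOD ((k + 1) * T + 1 : ℕ)] := by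
      apply PExpr.eval_modEq
      rintro ((_ | i) | j)
      · exact hCk
      · rfl
      · exact ha j k hk
    rw [ht0 k hk] at hmod
    exact Int.natCast_dvd.1 (Int.modEq_zero_iff_dvd.1 hmod)

theorem inter_forall_fin {α : Type} {n : ℕ} {S : Fin n → (α → ℕ) → Prop}
    (h : ∀ j, Dioph {v | S j v}) : Dioph {v | ∀ j, S j v} := by
  induction n with
  | zero => exact (eq_dioph (cst 0) (cst 0)).ext fun v => by simp
  | succ n ih =>
    refine ((h 0).inter (ih fun j => h j.succ)).ext fun v => ?_
    exact (Fin.forall_fin_succ (P := fun j => S j v)).symm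

theorem ball_dioph {α : Type} {P : (α → ℕ) → ℕ → Prop} {f : (α → ℕ) → ℕ}
    (hP : Dioph {w : Option α → ℕ | P (fun i => w (some i)) (w none)}) (df : DiophFn f) :
    Dioph {v | ∀ k < f v, P v k} := by
  obtain ⟨n, e, he⟩ := exists_fin_dummies hP
  have hPe : ∀ v k, P v k ↔ ∃ t, e.eval (pt k v t) = 0 := fun v k =>
    he (fun o => o.elim k v)
  obtain ⟨g, dg, hg⟩ := e.exists_bound (δ := Option α)
    (Sum.elim (fun o => o.elim (fun w => f (fun i => w (some i))) (fun i w => w (some i)))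
      (fun _ w => w none)) (by
        rintro ((_ | i) | j)
        · exact up df
        · exact proj_dioph (some i)
        · exact proj_dioph none)
  -- the quantities `T` and `N`
  let Tf : (Option α → ℕ) → ℕ := fun w => (f (fun i => w (some i)) + w none + g w).factorial
  have dT : DiophFn Tf := factorial_dioph (add_dioph (add_dioph (up df) (proj_dioph none)) dg)
  let Nf : (Option α → ℕ) → ℕ := fun w =>
    ∏ k ∈ Finset.range (f (fun i => w (some i))), ((k + 1) * Tf w + 1)
  have dN : DiophFn Nf := prod_dioph (up df) dT fun w => Nat.factorial_pos _
  let emb : Option α → Option (Option α) ⊕ Fin n := fun o => Sum.inl (some o)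
  let dT' := reindex_diophFn emb dT
  let dN' := reindex_diophFn emb dN
  let q : Poly (Option (Option α) ⊕ Fin n) :=
    Poly.map (Sum.elim (fun o => o.elim (Sum.inl none) (fun i => Sum.inl (some (some i)))) Sum.inr)
      ⟨_, e.isPoly⟩
  have D : Dioph {z : Option (Option α) ⊕ Fin n → ℕ |
      (Nf (z ∘ emb) ∣ (z (Sum.inl none) + 1) * Tf (z ∘ emb) + 1) ∧
      (∀ j, Nf (z ∘ emb) ∣ (z (Sum.inr j)).descFactorial (z (emb none) + 1)) ∧
      Nf (z ∘ emb) ∣ (q z).natAbs} := by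
    refine (dvd_dioph dN' (add_dioph (mul_dioph (add_dioph (proj_dioph _) (cst 1)) dT')
      (cst 1))).inter (Dioph.inter ?_ (dvd_dioph dN' (abs_poly_dioph q)))
    exact inter_forall_fin fun j => dvd_dioph dN' (descFactorial_dioph (proj_dioph _)
      (add_dioph (proj_dioph _) (cst 1)))
  refine (ex1_dioph (ex1_dioph (ex_dioph D))).ext fun v => ?_
  have hq : ∀ (u C : ℕ) (a : Fin n → ℕ),
      q (Sum.elim (Option.elim' C (Option.elim' u v)) a) =
        e.eval (pt C v a) := by
    intro u C a
    change e.eval _ = e.eval _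
    congr 1
    funext i
    rcases i with (_ | i) | j <;> rfl
  have hbound : ∀ u k, k < f v → ∀ t : Fin n → ℕ, (∀ j, t j ≤ u) →
      (e.eval (pt k v t)).natAbs ≤ g (Option.elim' u v) := by
    intro u k hk t ht
    apply hg
    rintro ((_ | i) | j)
    · exact hk.le
    · exact le_rfl
    · exact ht j
  constructor
  · rintro ⟨u, C, a, h1, h2, h3⟩ k hk
    rw [hPe]
    refine ball_core_mp e v (f v) u _ (hbound u) _ rfl _ rfl C a h1 h2 ?_ k hk
    rw [← hq u]
    exact h3
  · intro H
    have H' : ∀ k < f v, ∃ t : Fin n → ℕ, e.eval (pt k v t) = 0 := fun k hk => (hPe v k).1 (H k hk)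
    choose! t ht using H'
    let u := ∑ k ∈ Finset.range (f v), ∑ j, t k j
    have hu : ∀ k < f v, ∀ j, t k j ≤ u := fun k hk j =>
      (Finset.single_le_sum (f := fun j => t k j) (fun _ _ => Nat.zero_le _)
        (Finset.mem_univ j)).trans
      (Finset.single_le_sum (f := fun k => ∑ j, t k j) (fun _ _ => Nat.zero_le _)
        (Finset.mem_range.2 hk))
    obtain ⟨C, a, h1, h2, h3⟩ := ball_core_mpr e v (f v) u
      (f v + u + g (Option.elim' u v)) (by omega) _ rfl _ rfl
      (fun k hk => ⟨t k, hu k hk, ht k hk⟩)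
    refine ⟨u, C, a, h1, h2, ?_⟩
    rw [← hq u] at h3
    exact h3

end MRDP

namespace MRDP
open Dioph

/-! ### Partial recursive functions have Diophantine graphs -/

/-- The graph of `f` is Diophantine (in a form closed under substitution). -/
def PD (f : ℕ →. ℕ) : Prop :=
  ∀ (α : Type) (g h : (α → ℕ) → ℕ), DiophFn g → DiophFn h → Dioph {v | h v ∈ f (g v)}

theorem exists_beta (n : ℕ) (s : ℕ → ℕ) :
    ∃ c d : ℕ, ∀ i ≤ n, c % ((i + 1) * d + 1) = s i := by
  let l := (List.range (n + 1)).map s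
  refine ⟨(Nat.unbeta l).unpair.1, (Nat.unbeta l).unpair.2, fun i hi => ?_⟩
  have hl : i < l.length := by simp [l]; omega
  have := Nat.beta_unbeta_coe l ⟨i, hl⟩
  simpa [Nat.beta, l] using this

theorem mem_prec_iff (f g : ℕ →. ℕ) (a n x : ℕ) :
    x ∈ (Nat.rec (f a) (fun y IH => do let i ← IH; g (Nat.pair a (Nat.pair y i))) n : Part ℕ) ↔
    ∃ c d : ℕ, c % ((0 + 1) * d + 1) ∈ f a ∧
      (∀ k < n, c % ((k + 1 + 1) * d + 1) ∈ g (Nat.pair a (Nat.pair k (c % ((k + 1) * d + 1))))) ∧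
      x = c % ((n + 1) * d + 1) := by
  constructor
  · intro hx
    have : ∃ s : ℕ → ℕ, s 0 ∈ f a ∧
        (∀ k < n, s (k + 1) ∈ g (Nat.pair a (Nat.pair k (s k)))) ∧ x = s n := by
      induction n generalizing x with
      | zero => exact ⟨fun _ => x, hx, by simp, rfl⟩
      | succ n ih =>
        simp only [Part.bind_eq_bind, Part.mem_bind_iff] at hx
        obtain ⟨i, hi, hx⟩ := hx
        obtain ⟨s, h0, hs, hn⟩ := ih i hi
        refine ⟨fun k => if k ≤ n then s k else x, by simpa using h0, fun k hk => ?_, by simp⟩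
        by_cases hkn : k < n
        · simpa [hkn.le, Nat.succ_le_of_lt hkn] using hs k hkn
        · obtain rfl : k = n := by omega
          simpa [← hn] using hx
    obtain ⟨s, h0, hs, hn⟩ := this
    obtain ⟨c, d, hcd⟩ := exists_beta n s
    refine ⟨c, d, ?_, fun k hk => ?_, ?_⟩
    · rw [hcd 0 (by omega)]; exact h0
    · rw [hcd (k + 1) (by omega), hcd k (by omega)]; exact hs k hk
    · rw [hcd n le_rfl]; exact hn
  · rintro ⟨c, d, h0, hs, rfl⟩
    induction n with
    | zero => exact h0
    | succ n ih =>
      simp only [Part.bind_eq_bind, Part.mem_bind_iff]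
      exact ⟨_, ih fun k hk => hs k (by omega), hs n (by omega)⟩

theorem beta_dioph {α : Type} {c d i : (α → ℕ) → ℕ} (hc : DiophFn c) (hd : DiophFn d)
    (hi : DiophFn i) : DiophFn fun v => c v % ((i v + 1) * d v + 1) :=
  mod_dioph hc (add_dioph (mul_dioph (add_dioph hi (cst 1)) hd) (cst 1))

theorem partrec_dioph {f : ℕ →. ℕ} (hf : Nat.Partrec f) : PD f := by
  induction hf with
  | zero =>
    intro α g h dg dh
    refine (eq_dioph dh (cst 0)).ext fun v => ?_
    exact Part.mem_some_iff.symm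
  | succ =>
    intro α g h dg dh
    refine (eq_dioph dh (add_dioph dg (cst 1))).ext fun v => ?_
    exact Part.mem_some_iff.symm
  | left =>
    intro α g h dg dh
    have : Dioph {v | ∃ b, Nat.pair (h v) b = g v} :=
      ex1 (eq_dioph (pair_dioph (up dh) (proj_dioph none)) (up dg))
    refine this.ext fun v => ?_
    refine Iff.trans ?_ Part.mem_some_iff.symm
    constructor
    · rintro ⟨b, hb⟩
      simp [← hb]
    · intro hh
      exact ⟨(g v).unpair.2, by rw [hh, Nat.pair_unpair]⟩
  | right =>
    intro α g h dg dh
    have : Dioph {v | ∃ b, Nat.pair b (h v) = g v} :=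
      ex1 (eq_dioph (pair_dioph (proj_dioph none) (up dh)) (up dg))
    refine this.ext fun v => ?_
    refine Iff.trans ?_ Part.mem_some_iff.symm
    constructor
    · rintro ⟨b, hb⟩
      simp [← hb]
    · intro hh
      exact ⟨(g v).unpair.1, by rw [hh, Nat.pair_unpair]⟩
  | @pair p q hp hq ihp ihq =>
    intro α g h dg dh
    have : Dioph {v | ∃ a b, a ∈ p (g v) ∧ b ∈ q (g v) ∧ Nat.pair a b = h v} := by
      refine ex1 (ex1 ?_)
      exact (ihp _ _ _ (up (up dg)) (proj_dioph (some none))).inter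
        ((ihq _ _ _ (up (up dg)) (proj_dioph none)).inter
          (eq_dioph (pair_dioph (proj_dioph (some none)) (proj_dioph none)) (up (up dh))))
    refine this.ext fun v => ?_
    simp [Seq.seq, eq_comm]
  | @comp p q hp hq ihp ihq =>
    intro α g h dg dh
    have : Dioph {v | ∃ a, a ∈ q (g v) ∧ h v ∈ p a} := by
      refine ex1 ?_
      exact (ihq _ _ _ (up dg) (proj_dioph none)).inter (ihp _ _ _ (proj_dioph none) (up dh))
    exact this.ext fun v => Part.mem_bind_iff.symm
  | @prec p q hp hq ihp ihq =>
    intro α g h dg dh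
    have : Dioph {v | ∃ a n c d, Nat.pair a n = g v ∧ c % ((0 + 1) * d + 1) ∈ p a ∧
      (∀ k < n, c % ((k + 1 + 1) * d + 1) ∈ q (Nat.pair a (Nat.pair k (c % ((k + 1) * d + 1))))) ∧
      h v = c % ((n + 1) * d + 1)} := by
      refine ex1 (ex1 (ex1 (ex1 ?_)))
      have da : DiophFn fun w : Option (Option (Option (Option α))) → ℕ =>
        w (some (some (some none))) := proj_dioph _
      have dn : DiophFn fun w : Option (Option (Option (Option α))) → ℕ =>
        w (some (some none)) := proj_dioph _
      have dc : DiophFn fun w : Option (Option (Option (Option α))) → ℕ =>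
        w (some none) := proj_dioph _
      have dd : DiophFn fun w : Option (Option (Option (Option α))) → ℕ => w none := proj_dioph _
      refine (eq_dioph (pair_dioph da dn) (up (up (up (up dg))))).inter
        (Dioph.inter (ihp _ _ _ da (beta_dioph dc dd (cst 0))) (Dioph.inter ?_
          (eq_dioph (up (up (up (up dh)))) (beta_dioph dc dd dn))))
      refine ball_dioph (f := fun w : Option (Option (Option (Option α))) → ℕ =>
        w (some (some none))) (P := fun w k => w (some none) % ((k + 1 + 1) * w none + 1) ∈
          q (Nat.pair (w (some (some (some none))))
            (Nat.pair k (w (some none) % ((k + 1) * w none + 1))))) ?_ dn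
      exact ihq _ _ _ (pair_dioph (up da) (pair_dioph (proj_dioph none)
        (beta_dioph (up dc) (up dd) (proj_dioph none))))
        (beta_dioph (up dc) (up dd) (add_dioph (proj_dioph none) (cst 1)))
    refine this.ext fun v => ?_
    simp only [Set.mem_ofPred_eq, Nat.unpaired]
    rw [mem_prec_iff]
    constructor
    · rintro ⟨a, n, c, d, h1, h2⟩
      rw [← h1, Nat.unpair_pair]
      exact ⟨c, d, h2⟩
    · rintro ⟨c, d, h2⟩
      exact ⟨_, _, c, d, Nat.pair_unpair _, h2⟩
  | @rfind p hp ihp =>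
    intro α g h dg dh
    have : Dioph {v | 0 ∈ p (Nat.pair (g v) (h v)) ∧
        ∀ k < h v, ∃ z, z ∈ p (Nat.pair (g v) k) ∧ z ≠ 0} := by
      refine (ihp _ _ _ (pair_dioph dg dh) (cst 0)).inter ?_
      refine ball_dioph (f := h) (P := fun v k => ∃ z, z ∈ p (Nat.pair (g v) k) ∧ z ≠ 0) ?_ dh
      refine ex1 ?_
      exact (ihp _ _ _ (pair_dioph (up (up dg)) (proj_dioph (some none))) (proj_dioph none)).inter
        (ne_dioph (proj_dioph none) (cst 0))
    refine this.ext fun v => ?_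
    refine Iff.trans ?_ Nat.mem_rfind.symm
    simp

/-- There is a Diophantine set of natural numbers (in one parameter) that is undecidable. -/
theorem exists_undecidable_dioph :
    ∃ K : ℕ → Prop, ¬ ComputablePred K ∧ Dioph {v : Unit → ℕ | K (v ())} := by
  let f : ℕ →. ℕ := fun n => Nat.Partrec.Code.eval (Denumerable.ofNat Nat.Partrec.Code n) 0
  have hf : Partrec f := Nat.Partrec.Code.eval_part.comp (Computable.ofNat _) (Computable.const 0)
  refine ⟨fun n => (f n).Dom, ?_, ?_⟩
  · intro h
    apply ComputablePred.halting_problem 0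
    have := h.computable_of_manyOneReducible
      (p := fun c : Nat.Partrec.Code => (Nat.Partrec.Code.eval c 0).Dom)
      ⟨Encodable.encode, Computable.encode, fun c => by simp [f]⟩
    exact this
  · have := partrec_dioph (Partrec.nat_iff.1 hf)
    have h2 : Dioph {v : Unit → ℕ | ∃ x, x ∈ f (v ())} :=
      ex1 (this _ _ _ (proj_dioph (some ())) (proj_dioph none))
    exact h2.ext fun v => (Part.dom_iff_mem).symm

end MRDP

namespace MRDP

/-! ### Off-diagonal quadratic forms -/

/-- `g` is an integral quadratic form without diagonal terms. -/
inductive Off {U : Type} : ((U → ℤ) → ℤ) → Prop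
  | mul : ∀ u v : U, u ≠ v → Off fun x => x u * x v
  | sub : ∀ f g : (U → ℤ) → ℤ, Off f → Off g → Off fun x => f x - g x

theorem Off.exists_coeff {U : Type} {s : ℕ} (e : U ≃ Fin s) {g : (U → ℤ) → ℤ} (h : Off g) :
    ∃ a : Fin s → Fin s → ℤ, ∀ x : Fin s → ℤ,
      (∑ i : Fin s, ∑ j : Fin s, if i < j then a i j * (x i * x j) else 0) = g (x ∘ e) := by
  induction h with
  | mul u v huv =>
    have key : ∀ p q : Fin s, p < q → ∀ x : Fin s → ℤ,
        (∑ i : Fin s, ∑ j : Fin s, if i < j then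
          (if i = p ∧ j = q then (1 : ℤ) else 0) * (x i * x j) else 0) = x p * x q := by
      intro p q hpq x
      rw [Finset.sum_eq_single p, Finset.sum_eq_single q]
      · simp [hpq]
      · intro j _ hj; simp [hj]
      · simp
      · intro i _ hi; simp [hi]
      · simp
    have hne : e u ≠ e v := fun h => huv (e.injective h)
    rcases lt_or_gt_of_ne hne with h | h
    · exact ⟨_, fun x => key _ _ h x⟩
    · exact ⟨_, fun x => (key _ _ h x).trans (mul_comm _ _)⟩
  | sub f g _ _ ihf ihg =>
    obtain ⟨a, ha⟩ := ihf
    obtain ⟨b, hb⟩ := ihg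
    refine ⟨fun i j => a i j - b i j, fun x => ?_⟩
    change _ = f (x ∘ e) - g (x ∘ e)
    rw [← ha, ← hb, ← Finset.sum_sub_distrib]
    refine Finset.sum_congr rfl fun i _ => ?_
    rw [← Finset.sum_sub_distrib]
    refine Finset.sum_congr rfl fun j _ => ?_
    split_ifs <;> ring

theorem primrec_natCast : Primrec (fun n : ℕ => (n : ℤ)) := by
  refine Primrec.encode_iff.1 ?_
  have : Primrec fun n : ℕ => 2 * n := Primrec.nat_mul.comp (Primrec.const 2) Primrec.id
  exact this.of_eq fun n => rfl

theorem undecidable_of_system {U : Type} [Fintype U] (l : List (((U → ℤ) → ℤ) × ℤ))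
    (f₀ : (U → ℤ) → ℤ) (h₀ : Off f₀) (hl : ∀ p ∈ l, Off p.1) (K : ℕ → Prop)
    (hK : ∀ N, K N ↔ ∃ x, f₀ x = N ∧ ∀ p ∈ l, p.1 x = p.2) (hund : ¬ ComputablePred K) :
    ∃ m s : ℕ, ¬ ComputablePred
      (fun p : (Fin m → Fin s → Fin s → ℤ) × (Fin m → ℤ) => SYM m s p.1 p.2) := by
  let e := Fintype.equivFin U
  obtain ⟨a₀, ha₀⟩ := h₀.exists_coeff e
  have hl' : ∀ i : Fin l.length, ∃ a : Fin (Fintype.card U) → Fin (Fintype.card U) → ℤ,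
      ∀ x : Fin (Fintype.card U) → ℤ,
      (∑ i, ∑ j, if i < j then a i j * (x i * x j) else 0) = (l.get i).1 (x ∘ e) :=
    fun i => (hl _ (l.get_mem i)).exists_coeff e
  choose a ha using hl'
  refine ⟨l.length + 1, Fintype.card U, fun H => hund ?_⟩
  let A : Fin (l.length + 1) → Fin (Fintype.card U) → Fin (Fintype.card U) → ℤ :=
    Fin.cons a₀ a
  let B : ℕ → Fin (l.length + 1) → ℤ := fun N => Fin.cons (N : ℤ) fun i => (l.get i).2
  have hB : Primrec B := by
    rw [Primrec.fin_curry]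
    have : Primrec₂ (fun (i : Fin (l.length + 1)) N => B N i) := by
      rw [Primrec.fin_curry₁]
      intro i
      induction i using Fin.cases with
      | zero => exact primrec_natCast
      | succ i => exact Primrec.const _
    exact this.swap
  refine H.computable_of_manyOneReducible ⟨fun N => (A, B N),
    ((Primrec.const A).pair hB).to_comp, fun N => ?_⟩
  rw [hK]
  constructor
  · rintro ⟨x, hx₀, hx⟩
    have hxe : (x ∘ e.symm) ∘ e = x := by funext u; simp
    refine ⟨x ∘ e.symm, fun q => ?_⟩
    induction q using Fin.cases with
    | zero => exact (ha₀ _).trans (by rw [hxe]; exact hx₀)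
    | succ i => exact (ha i _).trans (by rw [hxe]; exact hx _ (l.get_mem i))
  · rintro ⟨x, hx⟩
    refine ⟨x ∘ e, (ha₀ x).symm.trans (hx 0), fun p hp => ?_⟩
    obtain ⟨i, rfl⟩ := List.get_of_mem hp
    exact (ha i x).symm.trans (hx i.succ)

/-! ### Systems of quadratic equations -/

/-- Basic quadratic equations. -/
inductive QEq (V : Type) : Type
  | sq4 : V → V → V → V → V → QEq V
  | const : V → ℤ → QEq V
  | sub : V → V → V → QEq V
  | mul : V → V → V → QEq V

namespace QEq
variable {V W : Type}

/-- The equation holds at `x`. -/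
def holds (x : V → ℤ) : QEq V → Prop
  | sq4 u a b c d => x u = x a * x a + x b * x b + x c * x c + x d * x d
  | const u c => x u = c
  | sub u v w => x u - x v = x w
  | mul u v w => x u * x v = x w

/-- Renaming. -/
def map (r : V → W) : QEq V → QEq W
  | sq4 u a b c d => sq4 (r u) (r a) (r b) (r c) (r d)
  | const u c => const (r u) c
  | sub u v w => sub (r u) (r v) (r w)
  | mul u v w => mul (r u) (r v) (r w)

/-- Variables. -/
def vars : QEq V → List V
  | sq4 u a b c d => [u, a, b, c, d]
  | const u _ => [u]
  | sub u v w => [u, v, w]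
  | mul u v w => [u, v, w]

theorem holds_map (r : V → W) (x : W → ℤ) (q : QEq V) : (q.map r).holds x ↔ q.holds (x ∘ r) := by
  cases q <;> rfl

theorem holds_congr {x y : V → ℤ} {q : QEq V} (h : ∀ v ∈ q.vars, x v = y v) :
    q.holds x ↔ q.holds y := by
  cases q <;> simp_all [holds, vars]

/-- The left-hand side as off-diagonal quadratic form. -/
def lhs : QEq V → (Option V × Bool → ℤ) → ℤ
  | sq4 u a b c d => fun x =>
    x (none, false) * x (some u, false) - x (some a, false) * x (some a, true)
      - x (some b, false) * x (some b, true) - x (some c, false) * x (some c, true)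
      - x (some d, false) * x (some d, true)
  | const u _ => fun x => x (none, false) * x (some u, false)
  | sub u v w => fun x => x (none, false) * x (some u, false) - x (none, false) * x (some v, false)
      - x (none, false) * x (some w, false)
  | mul u v w => fun x => x (some u, false) * x (some v, true) - x (none, false) * x (some w, false)

/-- The right-hand side. -/
def rhs : QEq V → ℤ
  | const _ c => c
  | _ => 0

theorem off_lhs (q : QEq V) : Off q.lhs := by
  cases q <;> simp only [lhs] <;>
  repeat' first
    | exact Off.mul _ _ (by simp)
    | refine Off.sub _ _ ?_ ?_

theorem lhs_iff (q : QEq V) (x : Option V × Bool → ℤ) (ε : ℤ) (hε : ε * ε = 1)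
    (h0 : x (none, false) = ε) (hx : ∀ v, x (some v, true) = x (some v, false)) :
    q.lhs x = q.rhs ↔ q.holds fun v => ε * x (some v, false) := by
  have hsq : ∀ t s : ℤ, ε * t * (ε * s) = t * s := fun t s => by
    linear_combination (t * s) * hε
  cases q with
  | sq4 u a b c d =>
    simp only [lhs, rhs, holds, h0, hx, hsq]
    constructor <;> intro h <;> linarith
  | const u c => simp only [lhs, rhs, holds, h0]
  | sub u v w =>
    simp only [lhs, rhs, holds, h0]
    constructor <;> intro h <;> linarith
  | mul u v w =>
    simp only [lhs, rhs, holds, h0, hx, hsq]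
    constructor <;> intro h <;> linarith

end QEq

theorem undecidable_of_qsystem_fin {k : ℕ} (L : List (QEq (Fin k))) (u₀ : Fin k)
    (K : ℕ → Prop) (hund : ¬ ComputablePred K)
    (hK : ∀ N, K N ↔ ∃ x : Fin k → ℤ, x u₀ = N ∧ ∀ q ∈ L, q.holds x) :
    ∃ m s : ℕ, ¬ ComputablePred
      (fun p : (Fin m → Fin s → Fin s → ℤ) × (Fin m → ℤ) => SYM m s p.1 p.2) := by
  let l₁ : List (((Option (Fin k) × Bool → ℤ) → ℤ) × ℤ) := [(fun x => x (none, false) * x (none, true), 1)]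
  let l₂ : List (((Option (Fin k) × Bool → ℤ) → ℤ) × ℤ) := (List.finRange k).map fun i =>
    (fun x => x (none, false) * x (some i, false) - x (none, false) * x (some i, true), 0)
  let l₃ : List (((Option (Fin k) × Bool → ℤ) → ℤ) × ℤ) := L.map fun q => (q.lhs, q.rhs)
  refine undecidable_of_system (U := Option (Fin k) × Bool) (l₁ ++ l₂ ++ l₃)
    (fun x => x (none, false) * x (some u₀, false)) (Off.mul _ _ (by simp)) ?_ K ?_ hund
  · intro p hp
    simp only [l₁, l₂, l₃, List.mem_append, List.mem_map, List.mem_singleton] at hp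
    rcases hp with (rfl | ⟨i, _, rfl⟩) | ⟨q, _, rfl⟩
    · exact Off.mul _ _ (by simp)
    · exact Off.sub _ _ (Off.mul _ _ (by simp)) (Off.mul _ _ (by simp))
    · exact q.off_lhs
  · intro N
    rw [hK]
    constructor
    · rintro ⟨x, hx0, hx⟩
      let X : Option (Fin k) × Bool → ℤ := fun p => p.1.elim 1 x
      refine ⟨X, by simp [X, hx0], ?_⟩
      intro p hp
      simp only [l₁, l₂, l₃, List.mem_append, List.mem_map, List.mem_singleton] at hp
      rcases hp with (rfl | ⟨i, _, rfl⟩) | ⟨q, hq, rfl⟩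
      · simp [X]
      · simp [X]
      · refine (q.lhs_iff X 1 (by norm_num) rfl fun v => rfl).2 ?_
        simpa [X] using hx q hq
    · rintro ⟨X, hX0, hX⟩
      have h1 : X (none, false) * X (none, true) = 1 :=
        hX (fun x => x (none, false) * x (none, true), 1) (by simp [l₁])
      have h2 : ∀ i, X (none, false) * X (some i, false) - X (none, false) * X (some i, true) = 0 :=
        fun i => hX (fun x => x (none, false) * x (some i, false)
          - x (none, false) * x (some i, true), 0) (by simp [l₂])
      have h3 : ∀ q ∈ L, q.lhs X = q.rhs := fun q hq =>
        hX (q.lhs, q.rhs) (by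
          simp only [l₃, List.mem_append, List.mem_map]
          exact Or.inr ⟨q, hq, rfl⟩)
      have hε : X (none, false) * X (none, false) = 1 := by
        rcases Int.eq_one_or_neg_one_of_mul_eq_one h1 with h | h <;> rw [h] <;> norm_num
      have hcopy : ∀ i, X (some i, true) = X (some i, false) := fun i => by
        linear_combination (X (some i, true) - X (some i, false)) * (-hε)
          - X (none, false) * h2 i
      exact ⟨fun v => X (none, false) * X (some v, false), hX0, fun q hq =>
        (q.lhs_iff X _ hε rfl hcopy).1 (h3 q hq)⟩

theorem undecidable_of_qsystem {V : Type} (L : List (QEq V)) (u₀ : V)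
    (K : ℕ → Prop) (hund : ¬ ComputablePred K)
    (hK : ∀ N, K N ↔ ∃ x : V → ℤ, x u₀ = N ∧ ∀ q ∈ L, q.holds x) :
    ∃ m s : ℕ, ¬ ComputablePred
      (fun p : (Fin m → Fin s → Fin s → ℤ) × (Fin m → ℤ) => SYM m s p.1 p.2) := by
  obtain ⟨n, r, hr⟩ := exists_finite_index (u₀ :: L.flatMap QEq.vars)
  refine undecidable_of_qsystem_fin (L.map (QEq.map r)) (r u₀) K hund fun N => ?_
  rw [hK]
  constructor
  · rintro ⟨X, h0, h⟩
    obtain ⟨x, hx⟩ := exists_extend hr X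
    refine ⟨x, by rw [hx u₀ (by simp), h0], ?_⟩
    intro q' hq'
    obtain ⟨q, hq, rfl⟩ := List.mem_map.1 hq'
    rw [QEq.holds_map]
    refine (QEq.holds_congr fun v hv => ?_).2 (h q hq)
    exact hx v (List.mem_cons_of_mem _ (List.mem_flatMap.2 ⟨q, hq, hv⟩))
  · rintro ⟨x, h0, h⟩
    exact ⟨x ∘ r, h0, fun q hq => (QEq.holds_map r x q).1 (h _ (List.mem_map_of_mem hq))⟩

/-! ### From polynomial expressions to quadratic systems -/

/-- The quadratic system computing an expression; every subexpression is a variable. -/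
def PExpr.sys {γ : Type} : PExpr γ → List (QEq ((γ × Fin 4) ⊕ PExpr γ))
  | var i => [.sq4 (.inr (var i)) (.inl (i, 0)) (.inl (i, 1)) (.inl (i, 2)) (.inl (i, 3))]
  | const c => [.const (.inr (const c)) c]
  | sub a b => .sub (.inr a) (.inr b) (.inr (sub a b)) :: (a.sys ++ b.sys)
  | mul a b => .mul (.inr a) (.inr b) (.inr (mul a b)) :: (a.sys ++ b.sys)

theorem PExpr.sys_sound {γ : Type} (e : PExpr γ) (x : (γ × Fin 4) ⊕ PExpr γ → ℤ)
    (h : ∀ q ∈ e.sys, q.holds x) :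
    x (.inr e) = e.eval fun i => (x (.inr (.var i))).toNat := by
  induction e with
  | var i =>
    have := h _ (List.mem_singleton_self _)
    simp only [QEq.holds] at this
    simp only [PExpr.eval]
    rw [Int.toNat_of_nonneg]
    rw [this]
    nlinarith [mul_self_nonneg (x (.inl (i, 0))), mul_self_nonneg (x (.inl (i, 1))),
      mul_self_nonneg (x (.inl (i, 2))), mul_self_nonneg (x (.inl (i, 3)))]
  | const c => exact h _ (List.mem_singleton_self _)
  | sub a b iha ihb =>
    simp only [PExpr.sys, List.mem_cons, List.mem_append] at h
    have h1 := h _ (Or.inl rfl)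
    simp only [QEq.holds] at h1
    rw [← h1, iha fun q hq => h q (Or.inr (Or.inl hq)), ihb fun q hq => h q (Or.inr (Or.inr hq))]
    rfl
  | mul a b iha ihb =>
    simp only [PExpr.sys, List.mem_cons, List.mem_append] at h
    have h1 := h _ (Or.inl rfl)
    simp only [QEq.holds] at h1
    rw [← h1, iha fun q hq => h q (Or.inr (Or.inl hq)), ihb fun q hq => h q (Or.inr (Or.inr hq))]
    rfl

theorem PExpr.sys_complete {γ : Type} (v : γ → ℕ) :
    ∃ x : (γ × Fin 4) ⊕ PExpr γ → ℤ, (∀ e : PExpr γ, x (.inr e) = e.eval v) ∧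
      ∀ e : PExpr γ, ∀ q ∈ e.sys, q.holds x := by
  have h4 : ∀ i, ∃ y : Fin 4 → ℕ, y 0 ^ 2 + y 1 ^ 2 + y 2 ^ 2 + y 3 ^ 2 = v i := fun i => by
    obtain ⟨a, b, c, d, h⟩ := Nat.sum_four_squares (v i)
    exact ⟨![a, b, c, d], h⟩
  choose y hy using h4
  refine ⟨Sum.elim (fun p => (y p.1 p.2 : ℤ)) (fun e => e.eval v), fun e => rfl, fun e => ?_⟩
  induction e with
  | var i =>
    intro q hq
    obtain rfl := List.mem_singleton.1 hq
    simp only [QEq.holds, Sum.elim_inl, Sum.elim_inr, PExpr.eval]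
    rw [← hy i]
    push_cast
    ring
  | const c =>
    intro q hq
    obtain rfl := List.mem_singleton.1 hq
    rfl
  | sub a b iha ihb =>
    intro q hq
    simp only [PExpr.sys, List.mem_cons, List.mem_append] at hq
    rcases hq with rfl | hq | hq
    · rfl
    · exact iha q hq
    · exact ihb q hq
  | mul a b iha ihb =>
    intro q hq
    simp only [PExpr.sys, List.mem_cons, List.mem_append] at hq
    rcases hq with rfl | hq | hq
    · rfl
    · exact iha q hq
    · exact ihb q hq

theorem sym_undecidable_aux :
    ∃ m s : ℕ, ¬ ComputablePred
      (fun p : (Fin m → Fin s → Fin s → ℤ) × (Fin m → ℤ) => SYM m s p.1 p.2) := by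
  obtain ⟨K, hund, hD⟩ := exists_undecidable_dioph
  obtain ⟨n, e, he⟩ := exists_fin_dummies hD
  refine undecidable_of_qsystem (QEq.const (.inr e) 0 :: e.sys)
    (.inr (.var (.inl ()))) K hund fun N => ?_
  refine (he fun _ => N).trans ?_
  constructor
  · rintro ⟨t, ht⟩
    obtain ⟨x, hx, hs⟩ := PExpr.sys_complete (Sum.elim (fun _ : Unit => N) t)
    refine ⟨x, by rw [hx]; rfl, ?_⟩
    intro q hq
    rcases List.mem_cons.1 hq with rfl | hq
    · exact (hx e).trans ht
    · exact hs e q hq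
  · rintro ⟨x, h0, hx⟩
    refine ⟨fun j => (x (.inr (.var (.inr j)))).toNat, ?_⟩
    have h1 := PExpr.sys_sound e x fun q hq => hx q (List.mem_cons_of_mem _ hq)
    have h2 : x (.inr e) = 0 := hx _ List.mem_cons_self
    rw [← h2, h1]
    congr 1
    funext i
    rcases i with i | j
    · change N = (x (.inr (.var (.inl ())))).toNat
      rw [h0]; simp
    · rfl

end MRDP

/-- There exist fixed `m, s` such that the predicate (SYM) on pairs of integer arrays
`(a, b)` is not computable. -/
theorem sym_undecidable :
    ∃ m s : ℕ, ¬ ComputablePred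
      (fun p : (Fin m → Fin s → Fin s → ℤ) × (Fin m → ℤ) => SYM m s p.1 p.2) := by
  exact MRDP.sym_undecidable_aux
end

section
/- There exist fixed natural numbers m and s such that there is no algorithm (no computable function) which, given arrays of integers a = (a^{i,j}_q) indexed by 1 ≤ i < j ≤ s and 1 ≤ q ≤ m, and b = (b_1,…,b_m), decides whether there exist integers x_1,…,x_s, y_1,…,y_s satisfying ∑_{1 ≤ i < j ≤ s} 2·a^{i,j}_q · (x_i y_j − x_j y_i) = b_q for every 1 ≤ q ≤ m. Formally: there exist m, s such that the predicate (SKEW') on pairs (a,b) is not a computable predicate with respect to the standard encoding of finite integer arrays. -/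
/-- The property (SKEW'): there are integers `x 1, …, x s, y 1, …, y s` such that
`∑_{1 ≤ i < j ≤ s} 2 * a q i j * (x i * y j - x j * y i) = b q` for every `q`. -/
def SKEW' (m s : ℕ) (a : Fin m → Fin s → Fin s → ℤ) (b : Fin m → ℤ) : Prop :=
  ∃ x y : Fin s → ℤ, ∀ q : Fin m,
    (∑ i : Fin s, ∑ j : Fin s,
      if i < j then 2 * a q i j * (x i * y j - x j * y i) else 0) = b q


namespace SkewUndec

open Dioph

/-- Polynomials respect congruences. -/
theorem isPoly_modEq {γ : Type} {f : (γ → ℕ) → ℤ} (hf : IsPoly f) (M : ℤ) (v w : γ → ℕ)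
    (h : ∀ i, (v i : ℤ) ≡ (w i : ℤ) [ZMOD M]) : f v ≡ f w [ZMOD M] := by
  induction hf with
  | proj i => exact h i
  | const n => exact Int.ModEq.refl _
  | sub _ _ ih1 ih2 => exact ih1.sub ih2
  | mul _ _ ih1 ih2 => exact ih1.mul ih2

/-- Polynomials have polynomial majorants. -/
theorem isPoly_majorant {γ : Type} {f : (γ → ℕ) → ℤ} (hf : IsPoly f) :
    ∃ g : Poly γ, ∀ v w : γ → ℕ, (∀ i, v i ≤ w i) → |f v| ≤ g w := by
  induction hf with
  | proj i =>
    refine ⟨Poly.proj i, fun v w h => ?_⟩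
    have := h i
    simp only [Poly.proj_apply, Nat.abs_cast]
    exact_mod_cast this
  | const n => exact ⟨Poly.const |n|, fun v w h => by simp⟩
  | sub _ _ ih1 ih2 =>
    obtain ⟨g1, h1⟩ := ih1
    obtain ⟨g2, h2⟩ := ih2
    refine ⟨g1 + g2, fun v w h => ?_⟩
    rw [Poly.add_apply]
    exact (abs_sub _ _).trans (add_le_add (h1 v w h) (h2 v w h))
  | mul _ _ ih1 ih2 =>
    obtain ⟨g1, h1⟩ := ih1
    obtain ⟨g2, h2⟩ := ih2
    refine ⟨g1 * g2, fun v w h => ?_⟩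
    rw [Poly.mul_apply, abs_mul]
    exact mul_le_mul (h1 v w h) (h2 v w h) (abs_nonneg _) ((abs_nonneg _).trans (h1 v w h))

/-- A polynomial only depends on finitely many variables. -/
theorem isPoly_support {γ : Type} {f : (γ → ℕ) → ℤ} (hf : IsPoly f) :
    ∃ s : Finset γ, ∀ v w : γ → ℕ, (∀ i ∈ s, v i = w i) → f v = f w := by
  classical
  induction hf with
  | proj i => exact ⟨{i}, fun v w h => by simp [h i (by simp)]⟩
  | const n => exact ⟨∅, fun v w h => rfl⟩
  | sub _ _ ih1 ih2 =>
    obtain ⟨s1, h1⟩ := ih1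
    obtain ⟨s2, h2⟩ := ih2
    refine ⟨s1 ∪ s2, fun v w h => ?_⟩
    beta_reduce
    rw [h1 v w (fun i hi => h i (by simp [hi])), h2 v w (fun i hi => h i (by simp [hi]))]
  | mul _ _ ih1 ih2 =>
    obtain ⟨s1, h1⟩ := ih1
    obtain ⟨s2, h2⟩ := ih2
    refine ⟨s1 ∪ s2, fun v w h => ?_⟩
    beta_reduce
    rw [h1 v w (fun i hi => h i (by simp [hi])), h2 v w (fun i hi => h i (by simp [hi]))]

theorem isPoly_subst {γ δ : Type} {f : (γ → ℕ) → ℤ} (hf : IsPoly f) (σ : γ → Option δ) :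
    IsPoly (fun v : δ → ℕ => f (fun i => (σ i).elim 0 v)) := by
  induction hf with
  | proj i =>
    rcases h : σ i with _ | d
    · simpa [h] using IsPoly.const (α := δ) 0
    · simpa [h] using IsPoly.proj d
  | const n => exact IsPoly.const n
  | sub _ _ ih1 ih2 => exact ih1.sub ih2
  | mul _ _ ih1 ih2 => exact ih1.mul ih2

/-- Every Diophantine set can be defined with finitely many dummies. -/
theorem dioph_finite {α : Type} {S : Set (α → ℕ)} (d : Dioph S) :
    ∃ (β : Type) (_ : Fintype β) (p : Poly (α ⊕ β)),
      ∀ v, v ∈ S ↔ ∃ t, p (Sum.elim v t) = 0 := by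
  classical
  obtain ⟨β, p, hp⟩ := d
  obtain ⟨s, hs⟩ := isPoly_support p.2
  let s' : Finset β := s.preimage Sum.inr (Sum.inr_injective.injOn)
  let σ : α ⊕ β → Option (α ⊕ s') :=
    Sum.elim (fun a => some (Sum.inl a))
      (fun b => if h : b ∈ s' then some (Sum.inr ⟨b, h⟩) else none)
  have key : ∀ v (t : β → ℕ),
      p.1 (fun i => (σ i).elim 0 (Sum.elim v (fun b : s' => t b))) = p.1 (Sum.elim v t) := by
    intro v t
    apply hs
    rintro (a | b) hi
    · simp [σ]
    · have : b ∈ s' := by simpa [s'] using hi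
      simp [σ, this]
  refine ⟨s', inferInstance, ⟨_, isPoly_subst p.2 σ⟩, fun v => (hp v).trans ⟨?_, ?_⟩⟩
  · rintro ⟨t, ht⟩
    exact ⟨fun b => t b, (key v t).trans ht⟩
  · rintro ⟨t, ht⟩
    refine ⟨fun b => if h : b ∈ s' then t ⟨b, h⟩ else 0, ?_⟩
    refine (key v _).symm.trans ?_
    have : (fun b : s' => (if h : (b : β) ∈ s' then t ⟨b, h⟩ else 0)) = t := by
      funext b; simp
    rw [this]
    exact ht

/-! ### Arithmetic of the moduli -/

/-- the moduli -/
def modu (Z k : ℕ) : ℕ := Z / (k + 1) + 1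

theorem modu_prod (Z n : ℕ) (h : ∀ k < n, (k + 1) ∣ Z) :
    ∏ k ∈ Finset.range n, modu Z k = (Z + n).choose n := by
  have h1 : ∀ m ≤ n, m.factorial * ∏ k ∈ Finset.range m, modu Z k = (Z + 1).ascFactorial m := by
    intro m hm
    induction m with
    | zero => simp
    | succ m ih =>
      rw [Finset.prod_range_succ, Nat.factorial_succ, Nat.ascFactorial_succ, ← ih (by omega)]
      have : (m + 1) * modu Z m = Z + 1 + m := by
        rw [modu, mul_add, Nat.mul_div_cancel' (h m (by omega))]; ring
      rw [← this]; ring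
  have h2 := h1 n le_rfl
  rw [Nat.ascFactorial_eq_factorial_mul_choose] at h2
  exact Nat.eq_of_mul_eq_mul_left (Nat.factorial_pos n) h2

theorem modu_dvd {Z n Q k : ℕ} (hZ : Z = Q.factorial ^ 2) (hn : n ≤ Q) (hk : k < n) :
    (k + 1) ∣ Z ∧ Q.factorial ∣ Z / (k + 1) := by
  have h1 : (k + 1) ∣ Q.factorial := Nat.dvd_factorial (by omega) (by omega)
  have h2 : (k + 1) ∣ Z := hZ ▸ h1.trans (dvd_pow_self _ two_ne_zero)
  refine ⟨h2, ?_⟩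
  obtain ⟨c, hc⟩ := h1
  refine ⟨c, ?_⟩
  rw [hZ, sq]
  nth_rewrite 1 [hc]
  rw [mul_assoc, Nat.mul_div_cancel_left _ (by omega), mul_comm]

theorem modu_prime {Z n Q k p : ℕ} (hZ : Z = Q.factorial ^ 2) (hn : n ≤ Q) (hk : k < n)
    (hp : p.Prime) (hd : p ∣ modu Z k) : Q < p := by
  by_contra hlt
  have h1 : p ∣ Q.factorial := (hp.dvd_factorial).2 (by omega)
  have h2 := h1.trans (modu_dvd hZ hn hk).2
  have h3 : p ∣ 1 := (Nat.dvd_add_right h2).1 hd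
  exact hp.one_lt.ne' (Nat.dvd_one.1 h3)

theorem modu_dvd_add {Z n Q k : ℕ} (hZ : Z = Q.factorial ^ 2) (hn : n ≤ Q) (hk : k < n) :
    modu Z k ∣ Z + (k + 1) := by
  refine ⟨k + 1, ?_⟩
  rw [modu, add_mul, Nat.div_mul_cancel (modu_dvd hZ hn hk).1, one_mul]

theorem modu_coprime {Z n Q k l : ℕ} (hZ : Z = Q.factorial ^ 2) (hn : n ≤ Q) (hk : k < n)
    (hl : l < n) (hkl : k ≠ l) : Nat.Coprime (modu Z k) (modu Z l) := by
  rw [Nat.coprime_iff_gcd_eq_one]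
  by_contra hne
  obtain ⟨p, hp, hd⟩ := Nat.exists_prime_and_dvd hne
  have h1 := hd.trans (Nat.gcd_dvd_left _ _)
  have h2 := hd.trans (Nat.gcd_dvd_right _ _)
  have hQ := modu_prime hZ hn hk hp h1
  have h3 : (p : ℤ) ∣ ((Z + (k + 1) : ℕ) : ℤ) :=
    Int.natCast_dvd_natCast.2 (h1.trans (modu_dvd_add hZ hn hk))
  have h4 : (p : ℤ) ∣ ((Z + (l + 1) : ℕ) : ℤ) :=
    Int.natCast_dvd_natCast.2 (h2.trans (modu_dvd_add hZ hn hl))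
  have h5 := dvd_sub h3 h4
  have h6 : ((Z + (k + 1) : ℕ) : ℤ) - ((Z + (l + 1) : ℕ) : ℤ) = (k : ℤ) - l := by push_cast; ring
  rw [h6] at h5
  have := Int.eq_zero_of_abs_lt_dvd h5 (by rw [abs_lt]; constructor <;> omega)
  omega

theorem choose_dvd_forward {M a y u : ℕ} (hM : Nat.Coprime M (u + 1).factorial)
    (hy : y ≤ u) (h : (a : ℤ) ≡ y [ZMOD M]) : M ∣ a.choose (u + 1) := by
  rcases lt_or_ge a (u + 1) with hlt | hge
  · rw [Nat.choose_eq_zero_of_lt hlt]; exact dvd_zero _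
  · apply hM.dvd_of_dvd_mul_left
    rw [← Nat.descFactorial_eq_factorial_mul_choose, Nat.descFactorial_eq_prod_range]
    refine Dvd.dvd.trans ?_ (Finset.dvd_prod_of_mem _ (Finset.mem_range.2 (Nat.lt_succ_of_le hy)))
    have := h.symm.dvd
    rw [← Nat.cast_sub (by omega)] at this
    exact_mod_cast this

theorem choose_dvd_backward {p a u : ℕ} (hp : p.Prime) (hu : u < p)
    (h : p ∣ a.choose (u + 1)) : a % p ≤ u := by
  have h1 : p ∣ a.descFactorial (u + 1) := by
    rw [Nat.descFactorial_eq_factorial_mul_choose]; exact h.mul_left _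
  rw [Nat.descFactorial_eq_prod_range, hp.prime.dvd_finsetProd_iff] at h1
  obtain ⟨j, hj, hd⟩ := h1
  rw [Finset.mem_range] at hj
  rcases lt_or_ge a j with hlt | hge
  · exact (Nat.mod_le _ _).trans (by omega)
  · have := (Nat.modEq_iff_dvd' hge).2 hd
    rw [← this, Nat.mod_eq_of_lt (by omega)]
    omega

end SkewUndec


namespace SkewUndec

open Dioph

theorem digit_sum (u : ℕ) (hu : 0 < u) : ∀ (k N : ℕ) (d : ℕ → ℕ), (∀ i, d i < u) → k < N →
    (∑ i ∈ Finset.range N, d i * u ^ i) / u ^ k % u = d k := by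
  intro k
  induction k with
  | zero =>
    intro N d hd hk
    obtain ⟨N, rfl⟩ : ∃ N', N = N' + 1 := ⟨N - 1, by omega⟩
    have h : ∀ i, d (i + 1) * u ^ (i + 1) = u * (d (i + 1) * u ^ i) := fun i => by ring
    rw [Finset.sum_range_succ']
    simp only [h, ← Finset.mul_sum]
    simp [Nat.mod_eq_of_lt (hd 0)]
  | succ k ih =>
    intro N d hd hk
    obtain ⟨N, rfl⟩ : ∃ N', N = N' + 1 := ⟨N - 1, by omega⟩
    have h : ∀ i, d (i + 1) * u ^ (i + 1) = u * (d (i + 1) * u ^ i) := fun i => by ring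
    rw [Finset.sum_range_succ']
    simp only [h, ← Finset.mul_sum]
    rw [pow_succ', ← Nat.div_div_eq_div_mul]
    have h2 : (u * ∑ i ∈ Finset.range N, d (i + 1) * u ^ i + d 0 * u ^ 0) / u
        = ∑ i ∈ Finset.range N, d (i + 1) * u ^ i := by
      rw [Nat.mul_add_div hu]
      simp [Nat.div_eq_of_lt (hd 0)]
    rw [h2]
    exact ih N (fun i => d (i + 1)) (fun i => hd _) (by omega)

theorem choose_formula (n k : ℕ) :
    (2 ^ n + 1 + 1) ^ n / (2 ^ n + 1) ^ k % (2 ^ n + 1) = n.choose k := by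
  have h := digit_sum (2 ^ n + 1) (by positivity) k (n + 1 + k) (fun i => n.choose i)
    (fun i => Nat.lt_succ_of_le (Nat.choose_le_two_pow n i)) (by omega)
  rw [← h]
  congr 2
  rw [add_pow, Finset.sum_range_add _ (n + 1) k]
  rw [Finset.sum_eq_zero (s := Finset.range k)]
  · simp [mul_comm]
  · intro i _
    rw [Nat.choose_eq_zero_of_lt (by omega), zero_mul]

theorem choose_dioph {α : Type} {f g : (α → ℕ) → ℕ} (df : DiophFn f) (dg : DiophFn g) :
    DiophFn fun v => (f v).choose (g v) := by
  have du : DiophFn fun v => 2 ^ f v + 1 := add_dioph (pow_dioph (const_dioph 2) df) (const_dioph 1)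
  have := mod_dioph (div_dioph (pow_dioph (add_dioph du (const_dioph 1)) df) (pow_dioph du dg)) du
  simpa only [Function.const, choose_formula] using this

theorem pow_le_desc (r : ℕ) : ∀ m ≤ r,
    r ^ m * r ≤ r.descFactorial m * r + m ^ 2 * r ^ m := by
  intro m
  induction m with
  | zero => simp
  | succ m ih =>
    intro hm
    have ih := ih (by omega)
    have h1 : r.descFactorial m ≤ r ^ m := Nat.descFactorial_le_pow r m
    rw [Nat.descFactorial_succ]
    obtain ⟨q, rfl⟩ : ∃ q, r = q + m := ⟨r - m, by omega⟩
    rw [Nat.add_sub_cancel, pow_succ]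
    set D := (q + m).descFactorial m
    set R := (q + m) ^ m
    calc R * (q + m) * (q + m) ≤ (D * (q + m) + m ^ 2 * R) * (q + m) := Nat.mul_le_mul_right _ ih
      _ = q * D * (q + m) + m * (q + m) * D + m ^ 2 * R * (q + m) := by ring
      _ ≤ q * D * (q + m) + m * (q + m) * R + m ^ 2 * R * (q + m) := by gcongr
      _ ≤ q * D * (q + m) + (m + 1) ^ 2 * (R * (q + m)) := by nlinarith [Nat.zero_le (R * (q + m)), Nat.zero_le (m * (R * (q+m)))]

theorem factorial_formula (n r : ℕ) (hr : (n.factorial + 1) * n ^ 2 + n < r) :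
    r ^ n / r.choose n = n.factorial := by
  have hrpos : 0 < r := by omega
  have h1 : r.descFactorial n ≤ r ^ n := Nat.descFactorial_le_pow r n
  have h2 := pow_le_desc r n (by omega)
  rw [Nat.descFactorial_eq_factorial_mul_choose] at h1 h2
  have hR : 0 < r ^ n := by positivity
  set R := r ^ n
  set F := n.factorial with hF
  set C := r.choose n
  have hFpos : 0 < F := Nat.factorial_pos n
  have hlt : R < (F + 1) * C := by
    by_contra hcon
    push Not at hcon
    -- (F+1) * R * r ≤ (F+1) * (F C r) + (F+1) n² R ≤ F r R + (F+1) n² R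
    have h3 : (F + 1) * (R * r) ≤ F * r * R + (F + 1) * n ^ 2 * R := by
      calc (F + 1) * (R * r) ≤ (F + 1) * (F * C * r + n ^ 2 * R) := Nat.mul_le_mul_left _ h2
        _ = F * r * ((F + 1) * C) + (F + 1) * n ^ 2 * R := by ring
        _ ≤ F * r * R + (F + 1) * n ^ 2 * R := by gcongr
    have h4 : r * R ≤ (F + 1) * n ^ 2 * R := by nlinarith
    have h5 := Nat.le_of_mul_le_mul_right h4 hR
    omega
  exact Nat.div_eq_of_lt_le h1 (by simpa using hlt)

theorem factorial_dioph {α : Type} {f : (α → ℕ) → ℕ} (df : DiophFn f) :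
    DiophFn fun v => (f v).factorial := by
  have dr : DiophFn fun v => (f v ^ f v + 1) * f v ^ 2 + f v + 1 :=
    add_dioph (add_dioph (mul_dioph (add_dioph (pow_dioph df df) (const_dioph 1))
      (pow_dioph df (const_dioph 2))) df) (const_dioph 1)
  have := div_dioph (pow_dioph dr df) (choose_dioph dr df)
  have e : ∀ n : ℕ, ((n ^ n + 1) * n ^ 2 + n + 1) ^ n / ((n ^ n + 1) * n ^ 2 + n + 1).choose n
      = n.factorial := by
    intro n
    apply factorial_formula
    have := Nat.factorial_le_pow n
    have := Nat.mul_le_mul_right (n ^ 2) (Nat.add_le_add_right this 1)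
    omega
  simpa only [e] using this

theorem forall_dioph {α ι : Type} [Fintype ι] {S : ι → Set (α → ℕ)} (d : ∀ i, Dioph (S i)) :
    Dioph {v | ∀ i, v ∈ S i} := by
  classical
  have : ∀ s : Finset ι, Dioph {v | ∀ i ∈ s, v ∈ S i} := by
    intro s
    induction s using Finset.induction_on with
    | empty => exact of_no_dummies _ 0 (by simp)
    | insert a s _ ih => exact ((d a).inter ih).ext (by simp)
  exact (this Finset.univ).ext (by simp)

theorem ball_core {α β : Type} [Fintype β] (p g : Poly (Option α ⊕ β))
    (hg : ∀ v w : Option α ⊕ β → ℕ, (∀ i, v i ≤ w i) → |p v| ≤ g w) (v : α → ℕ) (n : ℕ) :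
    (∀ k < n, ∃ t, p (Sum.elim (Option.elim' k v) t) = 0) ↔
    ∃ (a : β → ℕ) (u c Q Z M : ℕ),
      Q = (g (Sum.elim (Option.elim' n v) (fun _ => u))).natAbs + n + u + 1 ∧
      Z = Q.factorial ^ 2 ∧ M = (Z + n).choose n ∧
      M ∣ c + Z + 1 ∧ (∀ i, M ∣ (a i).choose (u + 1)) ∧
      M ∣ (p (Sum.elim (Option.elim' c v) a)).natAbs := by
  constructor
  · intro h
    choose! t ht using h
    let u := ∑ k ∈ Finset.range n, ∑ i, t k i
    have hu : ∀ k < n, ∀ i, t k i ≤ u := fun k hk i =>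
      (Finset.single_le_sum (f := fun i => t k i) (fun _ _ => Nat.zero_le _)
        (Finset.mem_univ i)).trans
      (Finset.single_le_sum (f := fun k => ∑ i, t k i) (fun _ _ => Nat.zero_le _)
        (Finset.mem_range.2 hk))
    obtain ⟨Q, hQ⟩ : ∃ Q, Q = (g (Sum.elim (Option.elim' n v) (fun _ => u))).natAbs + n + u + 1 :=
      ⟨_, rfl⟩
    obtain ⟨Z, hZ⟩ : ∃ Z, Z = Q.factorial ^ 2 := ⟨_, rfl⟩
    have hn : n ≤ Q := by omega
    have hM := modu_prod Z n (fun k hk => (modu_dvd hZ hn hk).1)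
    have hcop : (↑(Finset.range n) : Set ℕ).Pairwise (Function.onFun Nat.Coprime (modu Z)) := by
      intro k hk l hl hkl
      exact modu_coprime hZ hn (by simpa using hk) (by simpa using hl) hkl
    have hdvd : ∀ X : ℕ, (∀ k < n, modu Z k ∣ X) → (Z + n).choose n ∣ X := by
      intro X hX
      rw [← hM]
      apply Finset.prod_dvd_of_isRelPrime
      · intro k hk l hl hkl
        exact Nat.coprime_iff_isRelPrime.1 (hcop hk hl hkl)
      · intro k hk
        exact hX k (by simpa using hk)
    have hcrt : ∀ i, ∃ x : ℕ, ∀ k ∈ Finset.range n, x ≡ t k i [MOD modu Z k] := fun i =>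
      ⟨_, (Nat.chineseRemainderOfFinset (fun k => t k i) (modu Z) (Finset.range n)
        (fun k _ => by simp [modu]) hcop).2⟩
    choose a ha using hcrt
    have hMpos : 0 < (Z + n).choose n := Nat.choose_pos (by omega)
    obtain ⟨c, hc⟩ : ∃ c, (Z + n).choose n ∣ c + Z + 1 := by
      refine ⟨((Z + n).choose n - 1) * (Z + 1), Z + 1, ?_⟩
      obtain ⟨m, hm⟩ : ∃ m, (Z + n).choose n = m + 1 := ⟨_, (Nat.sub_add_cancel hMpos).symm⟩
      rw [hm, Nat.add_sub_cancel]
      ring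
    refine ⟨a, u, c, Q, Z, _, hQ, hZ, rfl, hc, ?_, ?_⟩
    · intro i
      apply hdvd
      intro k hk
      refine choose_dvd_forward (y := t k i) ?_ (hu k hk i) ?_
      · refine Nat.coprime_of_dvd' ?_
        intro q hq h1 h2
        have := modu_prime hZ hn hk hq h1
        have := (hq.dvd_factorial).1 h2
        omega
      · exact (Int.natCast_modEq_iff).2 (ha i k (by simpa using hk))
    · apply hdvd
      intro k hk
      rw [← Int.natCast_dvd]
      have hck : (c : ℤ) ≡ k [ZMOD (modu Z k : ℕ)] := by
        have h1 : modu Z k ∣ c + Z + 1 := by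
          refine Dvd.dvd.trans ?_ hc
          rw [← hM]
          exact Finset.dvd_prod_of_mem _ (by simpa using hk)
        have h2 := modu_dvd_add hZ hn hk
        apply Int.ModEq.symm
        rw [Int.modEq_iff_dvd]
        have := dvd_sub (Int.natCast_dvd_natCast.2 h1) (Int.natCast_dvd_natCast.2 h2)
        have e : ((c + Z + 1 : ℕ) : ℤ) - ((Z + (k + 1) : ℕ) : ℤ) = c - k := by push_cast; ring
        rwa [e] at this
      have := isPoly_modEq p.2 (modu Z k : ℕ) (Sum.elim (Option.elim' c v) a)
        (Sum.elim (Option.elim' k v) (t k)) (by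
          rintro ((_ | x) | i)
          · exact hck
          · exact Int.ModEq.refl _
          · exact (Int.natCast_modEq_iff).2 (ha i k (by simpa using hk)))
      have h0 : p.1 (Sum.elim (Option.elim' k v) (t k)) = 0 := ht k hk
      rw [h0] at this
      exact Int.modEq_zero_iff_dvd.1 this
  · rintro ⟨a, u, c, Q, Z, M, hQ, hZ, hM', hc, ha, hp⟩ k hk
    have hn : n ≤ Q := by omega
    have hM := modu_prod Z n (fun k hk => (modu_dvd hZ hn hk).1)
    rw [← hM'] at hM
    have hne : modu Z k ≠ 1 := by
      have h1 := (modu_dvd hZ hn hk).1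
      have hZ0 : 0 < Z := by rw [hZ]; positivity
      have := Nat.div_pos (Nat.le_of_dvd hZ0 h1) (by omega)
      unfold modu
      omega
    obtain ⟨q, hq, hqd⟩ := Nat.exists_prime_and_dvd hne
    have hqQ := modu_prime hZ hn hk hq hqd
    have hqM : q ∣ M := hqd.trans (hM ▸ Finset.dvd_prod_of_mem _ (by simpa using hk))
    refine ⟨fun i => a i % q, ?_⟩
    have hck : (c : ℤ) ≡ k [ZMOD q] := by
      have h1 : q ∣ c + Z + 1 := hqM.trans hc
      have h2 := hqd.trans (modu_dvd_add hZ hn hk)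
      apply Int.ModEq.symm
      rw [Int.modEq_iff_dvd]
      have := dvd_sub (Int.natCast_dvd_natCast.2 h1) (Int.natCast_dvd_natCast.2 h2)
      have e : ((c + Z + 1 : ℕ) : ℤ) - ((Z + (k + 1) : ℕ) : ℤ) = c - k := by push_cast; ring
      rwa [e] at this
    have h1 := isPoly_modEq p.2 q (Sum.elim (Option.elim' c v) a)
        (Sum.elim (Option.elim' k v) (fun i => a i % q)) (by
          rintro ((_ | x) | i)
          · exact hck
          · exact Int.ModEq.refl _
          · exact (Int.natCast_modEq_iff).2 (Nat.mod_modEq _ _).symm)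
    have h2 : (q : ℤ) ∣ p (Sum.elim (Option.elim' c v) a) := Int.natCast_dvd.2 (hqM.trans hp)
    have h3 : (q : ℤ) ∣ p (Sum.elim (Option.elim' k v) (fun i => a i % q)) :=
      (Int.ModEq.dvd_iff h1).1 h2
    have h4 := hg (Sum.elim (Option.elim' k v) (fun i => a i % q))
      (Sum.elim (Option.elim' n v) (fun _ => u)) (by
        rintro ((_ | x) | i)
        · exact hk.le
        · exact le_rfl
        · exact choose_dvd_backward (u := u) hq (by omega) (hqM.trans (ha i)))
    refine Int.eq_zero_of_abs_lt_dvd h3 (h4.trans_lt ?_)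
    omega

/-- **Bounded universal quantification** preserves Diophantine sets. -/
theorem ball_dioph {α : Type} {S : Set (Option α → ℕ)} (d : Dioph S) {f : (α → ℕ) → ℕ}
    (df : DiophFn f) : Dioph {v : α → ℕ | ∀ k < f v, Option.elim' k v ∈ S} := by
  obtain ⟨β, _, p, hp⟩ := dioph_finite d
  obtain ⟨g, hg⟩ := isPoly_majorant p.2
  let σp : Option α ⊕ β → α ⊕ (β ⊕ Fin 3) :=
    Sum.elim (Option.elim' (Sum.inr (Sum.inr 0)) Sum.inl) (fun b => Sum.inr (Sum.inl b))
  let σg : Option α ⊕ β → α ⊕ (β ⊕ Fin 3) :=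
    Sum.elim (Option.elim' (Sum.inr (Sum.inr 1)) Sum.inl) (fun _ => Sum.inr (Sum.inr 2))
  have hc : DiophFn fun w : α ⊕ (β ⊕ Fin 3) → ℕ => w (Sum.inr (Sum.inr 0)) := proj_dioph _
  have hn : DiophFn fun w : α ⊕ (β ⊕ Fin 3) → ℕ => w (Sum.inr (Sum.inr 1)) := proj_dioph _
  have hu : DiophFn fun w : α ⊕ (β ⊕ Fin 3) → ℕ => w (Sum.inr (Sum.inr 2)) := proj_dioph _
  have hQ := add_dioph (add_dioph (add_dioph (abs_poly_dioph (g.map σg)) hn) hu) (const_dioph 1)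
  have hZ := pow_dioph (factorial_dioph hQ) (const_dioph 2)
  have hM := choose_dioph (add_dioph hZ hn) hn
  have h1 := eq_dioph hn (reindex_diophFn (Sum.inl : α → α ⊕ (β ⊕ Fin 3)) df)
  have h2 := dvd_dioph hM (add_dioph (add_dioph hc hZ) (const_dioph 1))
  have h3 := forall_dioph (fun i : β => dvd_dioph hM
    (choose_dioph (proj_dioph (Sum.inr (Sum.inl i))) (add_dioph hu (const_dioph 1))))
  have h4 := dvd_dioph hM (abs_poly_dioph (p.map σp))
  refine (ex_dioph (h1.inter (h2.inter (h3.inter h4)))).ext fun v => ?_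
  simp only [Set.mem_ofPred_eq, hp]
  rw [ball_core p g hg]
  have eg : ∀ x : β ⊕ Fin 3 → ℕ, (Sum.elim v x ∘ σg) =
      Sum.elim (Option.elim' (x (Sum.inr 1)) v) (fun _ => x (Sum.inr 2)) := by
    intro x; funext i; rcases i with (_ | i) | i <;> rfl
  have ep : ∀ x : β ⊕ Fin 3 → ℕ, (Sum.elim v x ∘ σp) =
      Sum.elim (Option.elim' (x (Sum.inr 0)) v) (fun b => x (Sum.inl b)) := by
    intro x; funext i; rcases i with (_ | i) | i <;> rfl
  constructor
  · rintro ⟨x, a1, a2, a3, a4⟩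
    simp only [Set.mem_ofPred_eq, Poly.map_apply, eg, ep, Sum.elim_inr, Sum.elim_comp_inl,
      Function.const] at a1 a2 a3 a4
    rw [a1] at a2 a3 a4
    exact ⟨fun b => x (Sum.inl b), x (Sum.inr 2), x (Sum.inr 0), _, _, _, rfl, rfl, rfl, a2, a3, a4⟩
  · rintro ⟨a, u, c, Q, Z, M, rfl, rfl, rfl, a2, a3, a4⟩
    refine ⟨Sum.elim a ![c, f v, u], ?_, ?_, ?_, ?_⟩
    · rfl
    · simp only [Set.mem_ofPred_eq, Poly.map_apply, eg]
      exact a2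
    · simp only [Set.mem_ofPred_eq, Poly.map_apply, eg]
      exact a3
    · simp only [Set.mem_ofPred_eq, Poly.map_apply, eg, ep]
      exact a4

end SkewUndec


namespace SkewUndec

open Dioph

theorem ex_dioph' {α : Type} {R : (α → ℕ) → ℕ → Prop}
    (h : Dioph {w : Option α → ℕ | R (w ∘ some) (w none)}) : Dioph {v | ∃ x, R v x} :=
  (ex1_dioph h).ext fun _ => Iff.rfl

theorem ball_dioph' {α : Type} {R : (α → ℕ) → ℕ → Prop} {f : (α → ℕ) → ℕ} (df : DiophFn f)
    (h : Dioph {w : Option α → ℕ | R (w ∘ some) (w none)}) : Dioph {v | ∀ k < f v, R v k} :=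
  (ball_dioph h df).ext fun _ => Iff.rfl

/-- lifting a Diophantine function to one more variable -/
theorem lift_dioph {α : Type} {f : (α → ℕ) → ℕ} (df : DiophFn f) :
    DiophFn fun w : Option α → ℕ => f (w ∘ some) := reindex_diophFn some df

theorem last_dioph {α : Type} : DiophFn fun w : Option α → ℕ => w none := proj_dioph none

/-- A binary relation is Diophantine, in substitution form. -/
def DR (R : ℕ → ℕ → Prop) : Prop :=
  ∀ (α : Type) (f g : (α → ℕ) → ℕ), DiophFn f → DiophFn g → Dioph {v | R (f v) (g v)}

/-- A function given by its Diophantine graph -/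
theorem diophFn_of {α : Type} {f : (α → ℕ) → ℕ}
    (h : Dioph {w : Option α → ℕ | f (w ∘ some) = w none}) : DiophFn f := h

theorem pair_dioph {α : Type} {f g : (α → ℕ) → ℕ} (df : DiophFn f) (dg : DiophFn g) :
    DiophFn fun v => Nat.pair (f v) (g v) := by
  have df' := lift_dioph df
  have dg' := lift_dioph dg
  refine Dioph.ext (((lt_dioph df' dg').inter
    (eq_dioph (add_dioph (mul_dioph dg' dg') df') last_dioph)).union
    ((le_dioph dg' df').inter
    (eq_dioph (add_dioph (add_dioph (mul_dioph df' df') df') dg') last_dioph))) fun w => ?_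
  simp only [Set.mem_union, Set.mem_inter_iff, Set.mem_ofPred_eq, Nat.pair]
  split_ifs with h
  · have : ¬ g (w ∘ some) ≤ f (w ∘ some) := by omega
    simp [h, this]
  · have h' : g (w ∘ some) ≤ f (w ∘ some) := by omega
    simp [h, h']

theorem unpair1_dioph {α : Type} {f : (α → ℕ) → ℕ} (df : DiophFn f) :
    DiophFn fun v => (Nat.unpair (f v)).1 := by
  refine Dioph.ext (ex_dioph' (R := fun (w : Option α → ℕ) z => Nat.pair (w none) z = f (w ∘ some))
    (eq_dioph (pair_dioph (lift_dioph last_dioph) last_dioph) (lift_dioph (lift_dioph df))))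
    fun w => ?_
  simp only [Set.mem_ofPred_eq]
  constructor
  · rintro ⟨z, hz⟩
    rw [← hz, Nat.unpair_pair]
  · intro h
    exact ⟨(Nat.unpair (f (w ∘ some))).2, by rw [← h, Nat.pair_unpair]⟩

theorem unpair2_dioph {α : Type} {f : (α → ℕ) → ℕ} (df : DiophFn f) :
    DiophFn fun v => (Nat.unpair (f v)).2 := by
  refine Dioph.ext (ex_dioph' (R := fun (w : Option α → ℕ) z => Nat.pair z (w none) = f (w ∘ some))
    (eq_dioph (pair_dioph last_dioph (lift_dioph last_dioph)) (lift_dioph (lift_dioph df))))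
    fun w => ?_
  simp only [Set.mem_ofPred_eq]
  constructor
  · rintro ⟨z, hz⟩
    rw [← hz, Nat.unpair_pair]
  · intro h
    exact ⟨(Nat.unpair (f (w ∘ some))).1, by rw [← h, Nat.pair_unpair]⟩

theorem beta_dioph {α : Type} {f g : (α → ℕ) → ℕ} (df : DiophFn f) (dg : DiophFn g) :
    DiophFn fun v => Nat.beta (f v) (g v) :=
  mod_dioph (unpair1_dioph df) (add_dioph (mul_dioph (add_dioph dg (const_dioph 1))
    (unpair2_dioph df)) (const_dioph 1))

theorem prec_mem_iff (f g : ℕ →. ℕ) (a n y : ℕ) :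
    y ∈ (Nat.rec (f a) (fun y IH => do let i ← IH; g (Nat.pair a (Nat.pair y i))) n : Part ℕ) ↔
    ∃ s, Nat.beta s 0 ∈ f a ∧
      (∀ k < n, Nat.beta s (k + 1) ∈ g (Nat.pair a (Nat.pair k (Nat.beta s k)))) ∧
      y = Nat.beta s n := by
  have key : ∀ n y, y ∈ (Nat.rec (f a)
        (fun y IH => do let i ← IH; g (Nat.pair a (Nat.pair y i))) n : Part ℕ) ↔
      ∃ t : ℕ → ℕ, t 0 ∈ f a ∧
      (∀ k < n, t (k + 1) ∈ g (Nat.pair a (Nat.pair k (t k)))) ∧ y = t n := by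
    intro n
    induction n with
    | zero =>
      intro y
      constructor
      · intro h
        exact ⟨fun _ => y, h, by simp, rfl⟩
      · rintro ⟨t, h, -, rfl⟩
        exact h
    | succ n ih =>
      intro y
      refine Part.mem_bind_iff.trans ?_
      constructor
      · rintro ⟨i, hi, hy⟩
        obtain ⟨t, h0, h1, rfl⟩ := (ih i).1 hi
        refine ⟨fun k => if k ≤ n then t k else y, by simpa using h0, ?_, by simp⟩
        intro k hk
        rcases Nat.lt_succ_iff_lt_or_eq.1 hk with hk | rfl
        · have e1 : k + 1 ≤ n := hk
          have e2 : k ≤ n := by omega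
          simp only [e1, e2, if_true]
          exact h1 k hk
        · simpa using hy
      · rintro ⟨t, h0, h1, rfl⟩
        exact ⟨t n, (ih _).2 ⟨t, h0, fun k hk => h1 k (by omega), rfl⟩, h1 n (by omega)⟩
  rw [key]
  constructor
  · rintro ⟨t, h0, h1, rfl⟩
    let l : List ℕ := (List.range (n + 1)).map t
    have hl : ∀ k ≤ n, Nat.beta (Nat.unbeta l) k = t k := by
      intro k hk
      have := Nat.beta_unbeta_coe l ⟨k, by simp [l]; omega⟩
      simpa [l] using this
    refine ⟨Nat.unbeta l, ?_, ?_, ?_⟩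
    · rw [hl 0 (by omega)]; exact h0
    · intro k hk
      rw [hl _ hk, hl k hk.le]
      exact h1 k hk
    · rw [hl n le_rfl]
  · rintro ⟨s, h0, h1, rfl⟩
    exact ⟨Nat.beta s, h0, h1, rfl⟩

/-- The graph of every partial recursive function is Diophantine. -/
theorem partrec_dioph {f : ℕ →. ℕ} (hf : Nat.Partrec f) : DR (fun x y => y ∈ f x) := by
  induction hf with
  | zero =>
    intro α F G dF dG
    exact (eq_dioph dG (const_dioph 0)).ext fun v => (Part.mem_some_iff).symm
  | succ =>
    intro α F G dF dG
    exact (eq_dioph dG (add_dioph dF (const_dioph 1))).ext fun v => (Part.mem_some_iff).symm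
  | left =>
    intro α F G dF dG
    exact (eq_dioph dG (unpair1_dioph dF)).ext fun v => (Part.mem_some_iff).symm
  | right =>
    intro α F G dF dG
    exact (eq_dioph dG (unpair2_dioph dF)).ext fun v => (Part.mem_some_iff).symm
  | @pair f g _ _ ihf ihg =>
    intro α F G dF dG
    refine Dioph.ext ((ihf _ _ _ dF (unpair1_dioph dG)).inter
      (ihg _ _ _ dF (unpair2_dioph dG))) fun v => ?_
    simp only [Set.mem_inter_iff, Set.mem_ofPred_eq, Seq.seq, Part.map_eq_map,
      Part.mem_bind_iff, Part.mem_map_iff]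
    constructor
    · rintro ⟨h1, h2⟩
      exact ⟨_, ⟨_, h1, rfl⟩, _, h2, Nat.pair_unpair _⟩
    · rintro ⟨_, ⟨x, h1, rfl⟩, y, h2, h3⟩
      rw [← h3, Nat.unpair_pair]
      exact ⟨h1, h2⟩
  | @comp f g _ _ ihf ihg =>
    intro α F G dF dG
    refine Dioph.ext (ex_dioph' (R := fun v z => z ∈ g (F v) ∧ G v ∈ f z)
      ((ihg _ _ _ (lift_dioph dF) last_dioph).inter (ihf _ _ _ last_dioph (lift_dioph dG))))
      fun v => ?_
    exact Part.mem_bind_iff.symm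
  | @prec f g _ _ ihf ihg =>
    intro α F G dF dG
    have da := unpair1_dioph dF
    have dn := unpair2_dioph dF
    refine Dioph.ext (ex_dioph' (R := fun v s => Nat.beta s 0 ∈ f (F v).unpair.1 ∧
      (∀ k < (F v).unpair.2, Nat.beta s (k + 1) ∈
        g (Nat.pair (F v).unpair.1 (Nat.pair k (Nat.beta s k)))) ∧
      G v = Nat.beta s (F v).unpair.2) ?_) fun v => ?_
    · refine Dioph.inter (ihf _ _ _ (lift_dioph da) (beta_dioph last_dioph (const_dioph 0)))
        (Dioph.inter ?_ (eq_dioph (lift_dioph dG) (beta_dioph last_dioph (lift_dioph dn))))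
      refine ball_dioph' (R := fun (w : Option α → ℕ) k => Nat.beta (w none) (k + 1) ∈
        g (Nat.pair (F (w ∘ some)).unpair.1 (Nat.pair k (Nat.beta (w none) k))))
        (lift_dioph dn) ?_
      exact ihg _ _ _ (pair_dioph (lift_dioph (lift_dioph da)) (pair_dioph last_dioph
        (beta_dioph (lift_dioph last_dioph) last_dioph)))
        (beta_dioph (lift_dioph last_dioph) (add_dioph last_dioph (const_dioph 1)))
    · simp only [Set.mem_ofPred_eq]
      exact (prec_mem_iff f g _ _ _).symm
  | @rfind f _ ih =>
    intro α F G dF dG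
    refine Dioph.ext (Dioph.inter (ih _ _ _ (pair_dioph dF dG) (const_dioph 0))
      (ball_dioph' (R := fun v k => ∃ z, z + 1 ∈ f (Nat.pair (F v) k)) dG
        (ex_dioph' (R := fun (w : Option α → ℕ) z => z + 1 ∈ f (Nat.pair (F (w ∘ some)) (w none)))
          (ih _ _ _ (pair_dioph (lift_dioph (lift_dioph dF)) (lift_dioph last_dioph))
            (add_dioph last_dioph (const_dioph 1)))))) fun v => ?_
    refine Iff.trans ?_ Nat.mem_rfind.symm
    simp only [Set.mem_inter_iff, Set.mem_ofPred_eq, Part.map_eq_map,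
      Part.mem_map_iff, Function.const]
    constructor
    · rintro ⟨h1, h2⟩
      refine ⟨⟨0, h1, by simp⟩, fun {m} hm => ?_⟩
      obtain ⟨z, hz⟩ := h2 m hm
      exact ⟨z + 1, hz, by simp⟩
    · rintro ⟨⟨x, h1, hx⟩, h2⟩
      have hx : x = 0 := by simpa using hx
      subst hx
      refine ⟨h1, fun k hk => ?_⟩
      obtain ⟨z, hz, hz'⟩ := h2 hk
      have hz' : z ≠ 0 := by simpa using hz'
      exact ⟨z - 1, by rwa [Nat.sub_add_cancel (by omega)]⟩

/-- There is a Diophantine set which is not computable. -/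
theorem exists_noncomputable_dioph : ∃ K : ℕ → Prop, ¬ ComputablePred K ∧
    Dioph {v : Unit → ℕ | K (v ())} := by
  have hp : Nat.Partrec fun n => Nat.Partrec.Code.eval (Denumerable.ofNat Nat.Partrec.Code n) 0 :=
    Partrec.nat_iff.1
      (Nat.Partrec.Code.eval_part.comp (Computable.ofNat _) (Computable.const 0))
  refine ⟨fun n => (Nat.Partrec.Code.eval (Denumerable.ofNat Nat.Partrec.Code n) 0).Dom, ?_, ?_⟩
  · intro h
    apply ComputablePred.halting_problem 0
    refine ComputablePred.computable_of_manyOneReducible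
      ⟨Encodable.encode, Computable.encode, fun c => ?_⟩ h
    simp
  · refine Dioph.ext (ex_dioph' (R := fun v y => y ∈ Nat.Partrec.Code.eval
      (Denumerable.ofNat Nat.Partrec.Code (v ())) 0)
      (partrec_dioph hp _ _ _ (proj_dioph (some ())) last_dioph)) fun v => ?_
    exact Part.dom_iff_mem.symm

end SkewUndec

namespace SkewUndec

open Dioph

/-- Arithmetic expressions with one parameter and integer variables `(b, k)`. -/
inductive Ex (β : Type) : Type
  | param : Ex β
  | var (b : β) (k : Fin 4) : Ex β
  | const (c : ℤ) : Ex β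
  | add (x y : Ex β) : Ex β
  | sub (x y : Ex β) : Ex β
  | mul (x y : Ex β) : Ex β

/-- Evaluation of expressions. -/
def Ex.eval {β : Type} (n : ℤ) (z : β → Fin 4 → ℤ) : Ex β → ℤ
  | .param => n
  | .var b k => z b k
  | .const c => c
  | .add x y => x.eval n z + y.eval n z
  | .sub x y => x.eval n z - y.eval n z
  | .mul x y => x.eval n z * y.eval n z

theorem exists_expr {β : Type} {f : (Unit ⊕ β → ℕ) → ℤ} (hf : IsPoly f) :
    ∃ e : Ex β, ∀ (n : ℕ) (z : β → Fin 4 → ℤ) (t : β → ℕ),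
      (∀ b, (t b : ℤ) = z b 0 * z b 0 + z b 1 * z b 1 + z b 2 * z b 2 + z b 3 * z b 3) →
      e.eval n z = f (Sum.elim (fun _ => n) t) := by
  induction hf with
  | proj i =>
    rcases i with i | b
    · exact ⟨.param, fun n z t _ => rfl⟩
    · refine ⟨.add (.add (.add (.mul (.var b 0) (.var b 0)) (.mul (.var b 1) (.var b 1)))
        (.mul (.var b 2) (.var b 2))) (.mul (.var b 3) (.var b 3)), fun n z t h => ?_⟩
      exact (h b).symm
  | const c => exact ⟨.const c, fun n z t _ => rfl⟩
  | sub _ _ ih1 ih2 =>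
    obtain ⟨e1, h1⟩ := ih1
    obtain ⟨e2, h2⟩ := ih2
    refine ⟨.sub e1 e2, fun n z t h => ?_⟩
    simp only [Ex.eval, h1 n z t h, h2 n z t h]
  | mul _ _ ih1 ih2 =>
    obtain ⟨e1, h1⟩ := ih1
    obtain ⟨e2, h2⟩ := ih2
    refine ⟨.mul e1 e2, fun n z t h => ?_⟩
    simp only [Ex.eval, h1 n z t h, h2 n z t h]

theorem dioph_expr {K : ℕ → Prop} (h : Dioph {v : Unit → ℕ | K (v ())}) :
    ∃ (β : Type) (e : Ex β), ∀ n : ℕ, K n ↔ ∃ z, e.eval n z = 0 := by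
  obtain ⟨β, p, hp⟩ := h
  obtain ⟨e, he⟩ := exists_expr p.2
  refine ⟨β, e, fun n => (hp (fun _ => n)).trans ⟨?_, ?_⟩⟩
  · rintro ⟨t, ht⟩
    have hs : ∀ b, ∃ z : Fin 4 → ℤ, (t b : ℤ) = z 0 * z 0 + z 1 * z 1 + z 2 * z 2 + z 3 * z 3 := by
      intro b
      obtain ⟨x, y, z, w, h⟩ := Nat.sum_four_squares (t b)
      refine ⟨![x, y, z, w], ?_⟩
      rw [← h]
      simp
      ring
    choose z hz using hs
    exact ⟨z, (he n z t hz).trans ht⟩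
  · rintro ⟨z, hz⟩
    refine ⟨fun b => (z b 0 * z b 0 + z b 1 * z b 1 + z b 2 * z b 2 + z b 3 * z b 3).toNat, ?_⟩
    refine (he n z _ fun b => ?_).symm.trans hz
    apply Int.toNat_of_nonneg
    nlinarith [mul_self_nonneg (z b 0), mul_self_nonneg (z b 1), mul_self_nonneg (z b 2),
      mul_self_nonneg (z b 3)]

/-- a set of expressions closed under children -/
def Closed {β : Type} (T : Set (Ex β)) : Prop :=
  (∀ x y, Ex.add x y ∈ T → x ∈ T ∧ y ∈ T) ∧ (∀ x y, Ex.sub x y ∈ T → x ∈ T ∧ y ∈ T) ∧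
  (∀ x y, Ex.mul x y ∈ T → x ∈ T ∧ y ∈ T)

theorem Closed.union {β : Type} {T T' : Set (Ex β)} (h : Closed T) (h' : Closed T') :
    Closed (T ∪ T') := by
  obtain ⟨h1, h2, h3⟩ := h
  obtain ⟨h1', h2', h3'⟩ := h'
  refine ⟨?_, ?_, ?_⟩ <;> rintro x y (h | h)
  · exact ⟨.inl (h1 x y h).1, .inl (h1 x y h).2⟩
  · exact ⟨.inr (h1' x y h).1, .inr (h1' x y h).2⟩
  · exact ⟨.inl (h2 x y h).1, .inl (h2 x y h).2⟩
  · exact ⟨.inr (h2' x y h).1, .inr (h2' x y h).2⟩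
  · exact ⟨.inl (h3 x y h).1, .inl (h3 x y h).2⟩
  · exact ⟨.inr (h3' x y h).1, .inr (h3' x y h).2⟩

theorem Closed.insert {β : Type} {T : Set (Ex β)} (h : Closed T) (e : Ex β)
    (h1 : ∀ x y, Ex.add x y = e → x ∈ T ∧ y ∈ T) (h2 : ∀ x y, Ex.sub x y = e → x ∈ T ∧ y ∈ T)
    (h3 : ∀ x y, Ex.mul x y = e → x ∈ T ∧ y ∈ T) : Closed (Insert.insert e T) := by
  refine ⟨?_, ?_, ?_⟩ <;> rintro x y (hx | hx)
  · exact ⟨.inr (h1 x y hx).1, .inr (h1 x y hx).2⟩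
  · exact ⟨.inr (h.1 x y hx).1, .inr (h.1 x y hx).2⟩
  · exact ⟨.inr (h2 x y hx).1, .inr (h2 x y hx).2⟩
  · exact ⟨.inr (h.2.1 x y hx).1, .inr (h.2.1 x y hx).2⟩
  · exact ⟨.inr (h3 x y hx).1, .inr (h3 x y hx).2⟩
  · exact ⟨.inr (h.2.2 x y hx).1, .inr (h.2.2 x y hx).2⟩

theorem exists_closed {β : Type} (e : Ex β) : ∃ T : Set (Ex β), T.Finite ∧ e ∈ T ∧ Closed T := by
  have hempty : Closed (∅ : Set (Ex β)) := by
    refine ⟨?_, ?_, ?_⟩ <;> intro x y h <;> exact absurd h (Set.notMem_empty _)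
  induction e with
  | param => exact ⟨{.param}, Set.finite_singleton _, rfl, by simp [Closed]⟩
  | var b k => exact ⟨{.var b k}, Set.finite_singleton _, rfl, by simp [Closed]⟩
  | const c => exact ⟨{.const c}, Set.finite_singleton _, rfl, by simp [Closed]⟩
  | add x y ihx ihy =>
    obtain ⟨T1, f1, m1, c1⟩ := ihx
    obtain ⟨T2, f2, m2, c2⟩ := ihy
    refine ⟨insert (.add x y) (T1 ∪ T2), (f1.union f2).insert _, Set.mem_insert _ _,
      (c1.union c2).insert _ ?_ ?_ ?_⟩ <;> intro a b h <;> cases h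
    exact ⟨.inl m1, .inr m2⟩
  | sub x y ihx ihy =>
    obtain ⟨T1, f1, m1, c1⟩ := ihx
    obtain ⟨T2, f2, m2, c2⟩ := ihy
    refine ⟨insert (.sub x y) (T1 ∪ T2), (f1.union f2).insert _, Set.mem_insert _ _,
      (c1.union c2).insert _ ?_ ?_ ?_⟩ <;> intro a b h <;> cases h
    exact ⟨.inl m1, .inr m2⟩
  | mul x y ihx ihy =>
    obtain ⟨T1, f1, m1, c1⟩ := ihx
    obtain ⟨T2, f2, m2, c2⟩ := ihy
    refine ⟨insert (.mul x y) (T1 ∪ T2), (f1.union f2).insert _, Set.mem_insert _ _,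
      (c1.union c2).insert _ ?_ ?_ ?_⟩ <;> intro a b h <;> cases h
    exact ⟨.inl m1, .inr m2⟩

/-- The Plücker coordinates. -/
def plu {V : Type} (x y : V → ℤ) : V → V → ℤ := fun i j => x i * y j - x j * y i

/-- Coordinate functional. -/
def pr {V : Type} (i j : V) : (V → V → ℤ) →ₗ[ℤ] ℤ :=
  (LinearMap.proj (R := ℤ) (φ := fun _ : V => ℤ) j) ∘ₗ
    (LinearMap.proj (R := ℤ) (φ := fun _ : V => V → ℤ) i)

@[simp] theorem pr_apply {V : Type} (i j : V) (W : V → V → ℤ) : pr i j W = W i j := rfl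

/-- index of the vectors -/
abbrev Vx {β : Type} (T : Set (Ex β)) : Type := Bool ⊕ (T × Bool)

/-- The functional reading off the value of a node. -/
def valF {β : Type} (T : Set (Ex β)) (x : T) : (Vx T → Vx T → ℤ) →ₗ[ℤ] ℤ :=
  pr (.inl false) (.inr (x, true))

/-- The functional for the node equation. -/
def nodeF {β : Type} {T : Set (Ex β)} (hT : Closed T) : T → ((Vx T → Vx T → ℤ) →ₗ[ℤ] ℤ)
  | ⟨.param, h⟩ => valF T ⟨.param, h⟩
  | ⟨.var _ _, _⟩ => 0
  | ⟨.const c, h⟩ => valF T ⟨.const c, h⟩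
  | ⟨.add x y, h⟩ => valF T ⟨.add x y, h⟩ - valF T ⟨x, (hT.1 x y h).1⟩ - valF T ⟨y, (hT.1 x y h).2⟩
  | ⟨.sub x y, h⟩ =>
    valF T ⟨.sub x y, h⟩ - valF T ⟨x, (hT.2.1 x y h).1⟩ + valF T ⟨y, (hT.2.1 x y h).2⟩
  | ⟨.mul x y, h⟩ =>
    valF T ⟨.mul x y, h⟩ -
      pr (.inr (⟨x, (hT.2.2 x y h).1⟩, false)) (.inr (⟨y, (hT.2.2 x y h).2⟩, true))

/-- Right-hand side of the node equation. -/
def nodeB {β : Type} (n : ℤ) : Ex β → ℤ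
  | .param => n
  | .const c => c
  | _ => 0

/-- All functionals. -/
def allF {β : Type} {T : Set (Ex β)} (hT : Closed T) (e : T) :
    Option (Option (T × Fin 4)) → ((Vx T → Vx T → ℤ) →ₗ[ℤ] ℤ)
  | none => pr (.inl false) (.inl true)
  | some none => valF T e
  | some (some (x, 0)) => nodeF hT x
  | some (some (x, 1)) => pr (.inl false) (.inr (x, false))
  | some (some (x, 2)) => pr (.inl true) (.inr (x, true))
  | some (some (x, 3)) => pr (.inl true) (.inr (x, false)) + pr (.inl false) (.inr (x, true))

/-- All right-hand sides. -/
def allB {β : Type} (T : Set (Ex β)) (n : ℤ) : Option (Option (T × Fin 4)) → ℤ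
  | none => 1
  | some none => 0
  | some (some (x, 0)) => nodeB n x.1
  | some (some (_, 1)) => 0
  | some (some (_, 2)) => 0
  | some (some (_, 3)) => 0

theorem allB_cases {β : Type} (T : Set (Ex β)) (q : Option (Option (T × Fin 4))) :
    (∃ c, ∀ n, allB T n q = c) ∨ ∀ n, allB T n q = n := by
  rcases q with _ | _ | ⟨⟨x, hx⟩, k⟩
  · exact .inl ⟨1, fun _ => rfl⟩
  · exact .inl ⟨0, fun _ => rfl⟩
  · fin_cases k
    · cases x
      · exact .inr fun _ => rfl
      all_goals exact .inl ⟨_, fun _ => rfl⟩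
    all_goals exact .inl ⟨_, fun _ => rfl⟩

theorem system_iff {β : Type} {T : Set (Ex β)} (hT : Closed T) (e : T) (n : ℤ) :
    (∃ z, e.1.eval n z = 0) ↔ ∃ x y : Vx T → ℤ, ∀ q, allF hT e q (plu x y) = allB T n q := by
  constructor
  · rintro ⟨z, hz⟩
    refine ⟨Sum.elim (fun b => if b then 0 else 1)
      (fun p => if p.2 then 0 else p.1.1.eval n z), Sum.elim (fun b => if b then 1 else 0)
      (fun p => if p.2 then p.1.1.eval n z else 0), ?_⟩
    rintro (_ | _ | ⟨⟨x, hx⟩, k⟩)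
    · simp [allF, allB, plu]
    · simp [allF, allB, plu, valF, hz]
    · fin_cases k
      · cases x <;> simp [allF, allB, plu, nodeF, nodeB, valF, Ex.eval]
      · simp [allF, allB, plu]
      · simp [allF, allB, plu]
      · simp [allF, allB, plu]
  · rintro ⟨x, y, h⟩
    set W := plu x y with hW
    have h12 : W (.inl false) (.inl true) = 1 := h none
    have hroot : W (.inl false) (.inr (e, true)) = 0 := h (some none)
    have hnode : ∀ p : T, nodeF hT p W = nodeB n p.1 := fun p => h (some (some (p, 0)))
    have h1 : ∀ p : T, W (.inl false) (.inr (p, false)) = 0 := fun p => h (some (some (p, 1)))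
    have h2 : ∀ p : T, W (.inl true) (.inr (p, true)) = 0 := fun p => h (some (some (p, 2)))
    have h3 : ∀ p : T, W (.inl true) (.inr (p, false)) + W (.inl false) (.inr (p, true)) = 0 :=
      fun p => h (some (some (p, 3)))
    have hpl : ∀ i j, W (.inl false) (.inl true) * W i j =
        W (.inl false) i * W (.inl true) j - W (.inl false) j * W (.inl true) i := by
      intro i j
      simp only [hW, plu]
      ring
    have hmul : ∀ p q : T, W (.inr (p, false)) (.inr (q, true)) =
        W (.inl false) (.inr (p, true)) * W (.inl false) (.inr (q, true)) := by
      intro p q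
      have := hpl (.inr (p, false)) (.inr (q, true))
      rw [h12, h1, h2, one_mul] at this
      rw [this, eq_neg_of_add_eq_zero_left (h3 p)]
      ring
    classical
    let z : β → Fin 4 → ℤ := fun b k =>
      if hb : Ex.var b k ∈ T then W (.inl false) (.inr (⟨.var b k, hb⟩, true)) else 0
    have key : ∀ (p : Ex β) (hp : p ∈ T),
        W (.inl false) (.inr (⟨p, hp⟩, true)) = p.eval n z := by
      intro p
      induction p with
      | param => intro hp; exact hnode ⟨_, hp⟩
      | var b k => intro hp; simp [Ex.eval, z, hp]
      | const c => intro hp; exact hnode ⟨_, hp⟩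
      | add a b iha ihb =>
        intro hp
        have := hnode ⟨_, hp⟩
        simp only [nodeF, valF, nodeB, LinearMap.sub_apply, pr_apply] at this
        rw [iha, ihb] at this
        simp only [Ex.eval]
        linarith
      | sub a b iha ihb =>
        intro hp
        have := hnode ⟨_, hp⟩
        simp only [nodeF, valF, nodeB, LinearMap.sub_apply, LinearMap.add_apply, pr_apply] at this
        rw [iha, ihb] at this
        simp only [Ex.eval]
        linarith
      | mul a b iha ihb =>
        intro hp
        have := hnode ⟨_, hp⟩
        simp only [nodeF, valF, nodeB, LinearMap.sub_apply, pr_apply] at this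
        rw [hmul, iha, ihb] at this
        simp only [Ex.eval]
        linarith
    exact ⟨z, (key e.1 e.2).symm.trans hroot⟩

theorem functional_expand {s : ℕ} (F : (Fin s → Fin s → ℤ) →ₗ[ℤ] ℤ) (W : Fin s → Fin s → ℤ) :
    F W = ∑ i, ∑ j, F (Pi.single i (Pi.single j 1)) * W i j := by
  have h : W = ∑ i, ∑ j, W i j • (Pi.single i (Pi.single j 1) : Fin s → Fin s → ℤ) := by
    funext a b
    simp [Finset.sum_apply, Pi.single_apply, Finset.sum_ite_eq, ite_apply]
  conv_lhs => rw [h]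
  simp only [map_sum, map_smul, smul_eq_mul]
  exact Finset.sum_congr rfl fun i _ => Finset.sum_congr rfl fun j _ => mul_comm _ _

theorem skew_expand {s : ℕ} (A W : Fin s → Fin s → ℤ) (hW : ∀ i j, W j i = - W i j) :
    ∑ i, ∑ j, (if i < j then 2 * (A i j - A j i) * W i j else 0) =
      2 * ∑ i, ∑ j, A i j * W i j := by
  have h0 : ∀ i, W i i = 0 := fun i => by have := hW i i; omega
  have h1 : ∑ i, ∑ j, A i j * W i j =
      ∑ i, ∑ j, (if i < j then A i j * W i j else 0) +
        ∑ i, ∑ j, (if j < i then A i j * W i j else 0) := by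
    rw [← Finset.sum_add_distrib]
    refine Finset.sum_congr rfl fun i _ => ?_
    rw [← Finset.sum_add_distrib]
    refine Finset.sum_congr rfl fun j _ => ?_
    rcases lt_trichotomy i j with h | h | h
    · simp [h, h.not_gt]
    · subst h; simp [h0]
    · simp [h, h.not_gt]
  rw [h1, Finset.sum_comm (f := fun i j => if j < i then A i j * W i j else 0),
    ← Finset.sum_add_distrib, Finset.mul_sum]
  refine Finset.sum_congr rfl fun i _ => ?_
  rw [← Finset.sum_add_distrib, Finset.mul_sum]
  refine Finset.sum_congr rfl fun j _ => ?_
  split_ifs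
  · rw [hW i j]; ring
  · simp

theorem skew_of_functionals {V Q : Type} [Fintype V] [Fintype Q]
    (F : Q → ((V → V → ℤ) →ₗ[ℤ] ℤ)) :
    ∃ (m s : ℕ) (a : Fin m → Fin s → Fin s → ℤ) (eq : Fin m ≃ Q), ∀ b : Q → ℤ,
      (SKEW' m s a (fun q => 2 * b (eq q)) ↔ ∃ x y : V → ℤ, ∀ q, F q (plu x y) = b q) := by
  let ev := (Fintype.equivFin V).symm
  let eq := (Fintype.equivFin Q).symm
  let R : (Fin (Fintype.card V) → Fin (Fintype.card V) → ℤ) →ₗ[ℤ] (V → V → ℤ) :=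
    { toFun := fun W i j => W (ev.symm i) (ev.symm j)
      map_add' := fun _ _ => rfl
      map_smul' := fun _ _ => rfl }
  let C : Q → Fin (Fintype.card V) → Fin (Fintype.card V) → ℤ :=
    fun q i j => (F q ∘ₗ R) (Pi.single i (Pi.single j 1))
  refine ⟨_, _, fun q i j => C (eq q) i j - C (eq q) j i, eq, fun b => ?_⟩
  have main : ∀ (x y : Fin (Fintype.card V) → ℤ) (q : Fin (Fintype.card Q)),
      (∑ i, ∑ j, if i < j then
        2 * (C (eq q) i j - C (eq q) j i) * (x i * y j - x j * y i) else 0) =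
      2 * F (eq q) (plu (x ∘ ev.symm) (y ∘ ev.symm)) := by
    intro x y q
    have h1 := skew_expand (C (eq q)) (plu x y) (fun i j => by simp only [plu]; ring)
    have h2 := functional_expand (F (eq q) ∘ₗ R) (plu x y)
    refine h1.trans ?_
    rw [← h2]
    rfl
  constructor
  · rintro ⟨x, y, h⟩
    refine ⟨x ∘ ev.symm, y ∘ ev.symm, fun q => ?_⟩
    have h1 := h (eq.symm q)
    rw [main] at h1
    simp only [Equiv.apply_symm_apply] at h1
    omega
  · rintro ⟨x, y, h⟩
    refine ⟨x ∘ ev, y ∘ ev, fun q => ?_⟩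
    rw [main]
    have e1 : (x ∘ ev) ∘ ev.symm = x := by funext i; simp
    have e2 : (y ∘ ev) ∘ ev.symm = y := by funext i; simp
    rw [e1, e2, h]

theorem computable_two_mul : Computable fun n : ℕ => (2 * (n : ℤ)) := by
  apply Computable.encode_iff.1
  have h : ∀ n : ℕ, Encodable.encode (2 * (n : ℤ)) = 4 * n := by
    intro n
    have : (2 * (n : ℤ)) = Int.ofNat (2 * n) := by simp
    rw [this]
    change 2 * (2 * n) = 4 * n
    ring
  simp only [h]
  exact (Primrec.nat_mul.comp (Primrec.const 4) Primrec.id).to_comp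

end SkewUndec

/-- There exist fixed `m, s` such that the predicate (SKEW') on pairs of integer arrays
`(a, b)` is not computable. -/
theorem skew'_undecidable :
    ∃ m s : ℕ, ¬ ComputablePred
      (fun p : (Fin m → Fin s → Fin s → ℤ) × (Fin m → ℤ) => SKEW' m s p.1 p.2) := by
  obtain ⟨K, hK, hD⟩ := SkewUndec.exists_noncomputable_dioph
  obtain ⟨β, e, he⟩ := SkewUndec.dioph_expr hD
  obtain ⟨T, hfin, heT, hT⟩ := SkewUndec.exists_closed e
  have : Fintype T := hfin.fintype
  obtain ⟨m, s, a, eq, h⟩ := SkewUndec.skew_of_functionals (SkewUndec.allF hT ⟨e, heT⟩)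
  refine ⟨m, s, fun hc => hK ?_⟩
  refine ComputablePred.computable_of_manyOneReducible
    ⟨fun n : ℕ => (a, fun q => 2 * SkewUndec.allB T n (eq q)), ?_, fun n => ?_⟩ hc
  · refine Computable.pair (Computable.const a) ?_
    have hcomp : ∀ q : Fin m, Computable fun n : ℕ => 2 * SkewUndec.allB T n (eq q) := by
      intro q
      rcases SkewUndec.allB_cases T (eq q) with ⟨c, hc⟩ | hc
      · simp only [hc]; exact Computable.const _
      · simp only [hc]; exact SkewUndec.computable_two_mul
    exact ((Primrec.vector_get'.to_comp).comp (Computable.vector_ofFn hcomp)).of_eq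
      fun n => by funext i; simp
  · rw [he n, h]
    exact SkewUndec.system_iff hT ⟨e, heT⟩ n
end
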